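/- arXiv:0910.3603 — 4 statements merged into one kernel-verified Lean document; each statement's English description precedes it below -/
import Mathlib

section
/- Let S be a Polish space and let 𝕄 be a Borel probability measure on P(S). Then for every bounded continuous convex function f : P(S) → ℝ one has f(b(𝕄)) ≤ ∫ f(ν) 𝕄(dν), where b(𝕄) is the barycenter of 𝕄 (Jensen's inequality for barycenters). -/
open MeasureTheory Filter Topology ENNReal
open scoped NNReal

/-- The Borel σ-algebra on `P(S)` for the topology of weak convergence. -/
noncomputable instance probabilityMeasureMeasurableSpace
    {S : Type*} [MeasurableSpace S] [TopologicalSpace S] [OpensMeasurableSpace S] :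
    MeasurableSpace (ProbabilityMeasure S) := borel _

theorem jb_borel {S : Type*} [MeasurableSpace S] [TopologicalSpace S] [OpensMeasurableSpace S] :
    BorelSpace (ProbabilityMeasure S) := ⟨rfl⟩

theorem jb_meas_open {S : Type*} [TopologicalSpace S] [PolishSpace S] [MeasurableSpace S]
    [BorelSpace S] {G : Set S} (hG : IsOpen G) :
    Measurable (fun ν : ProbabilityMeasure S => (ν : Measure S) G) := by
  have : BorelSpace (ProbabilityMeasure S) := jb_borel
  apply LowerSemicontinuous.measurable
  intro μ c hc
  have h := ProbabilityMeasure.le_liminf_measure_open_of_tendsto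
    (μs := id) (L := 𝓝 μ) (μ := μ) tendsto_id hG
  exact eventually_lt_of_lt_liminf (lt_of_lt_of_le hc h)

theorem jb_slln {α : Type*} [MeasurableSpace α] (M : Measure α) [IsProbabilityMeasure M]
    (g : α → ℝ) (hg : Measurable g) (hb : ∃ C : ℝ, ∀ x, |g x| ≤ C) :
    ∀ᵐ ω ∂(Measure.infinitePi (fun _ : ℕ => M)),
      Tendsto (fun n : ℕ => (∑ i ∈ Finset.range n, g (ω i)) / n) atTop (𝓝 (∫ x, g x ∂M)) := by
  obtain ⟨C, hC⟩ := hb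
  have hmp : ∀ i : ℕ, MeasurePreserving (fun ω : ℕ → α => ω i)
      (Measure.infinitePi (fun _ : ℕ => M)) M :=
    fun i => measurePreserving_eval_infinitePi (fun _ : ℕ => M) i
  have hint : Integrable g M := Integrable.of_bound hg.aestronglyMeasurable C
    (Eventually.of_forall hC)
  have h := ProbabilityTheory.strong_law_ae_real
    (μ := Measure.infinitePi (fun _ : ℕ => M)) (fun i ω => g (ω i))
    ((hmp 0).integrable_comp_of_integrable hint)
    (fun i j hij => (ProbabilityTheory.iIndepFun_infinitePi (P := fun _ : ℕ => M)
      (X := fun _ => g) (fun _ => hg)).indepFun hij)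
    (fun i => ⟨(hg.comp (hmp i).measurable).aemeasurable, (hg.comp (hmp 0).measurable).aemeasurable, by
      have e : ∀ k : ℕ, Measure.map (fun ω : ℕ → α => g (ω k))
          (Measure.infinitePi (fun _ : ℕ => M)) = Measure.map g M := by
        intro k
        rw [← (hmp k).map_eq, Measure.map_map hg (hmp k).measurable]
        rw [(hmp k).map_eq]
        rfl
      rw [e i, e 0]⟩)
  have e : (∫ ω, g (ω 0) ∂(Measure.infinitePi (fun _ : ℕ => M))) = ∫ x, g x ∂M := by
    conv_rhs => rw [← (hmp 0).map_eq]
    rw [integral_map (hmp 0).measurable.aemeasurable hg.aestronglyMeasurable]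
  rw [← e]
  exact h

noncomputable def jbAvg {S : Type*} [MeasurableSpace S] (ν : ℕ → ProbabilityMeasure S) (n : ℕ) :
    ProbabilityMeasure S :=
  ⟨((n + 1 : ℕ) : ℝ≥0∞)⁻¹ • ∑ i ∈ Finset.range (n + 1), (ν i : Measure S), ⟨by
    simp only [Measure.smul_apply, Measure.finsetSum_apply, measure_univ, smul_eq_mul,
      Finset.sum_const, Finset.card_range, nsmul_eq_mul, mul_one]
    exact ENNReal.inv_mul_cancel (by simp) (by finiteness)⟩⟩

theorem jbAvg_coe {S : Type*} [MeasurableSpace S] (ν : ℕ → ProbabilityMeasure S) (n : ℕ) :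
    (jbAvg ν n : Measure S) =
      ((n + 1 : ℕ) : ℝ≥0∞)⁻¹ • ∑ i ∈ Finset.range (n + 1), (ν i : Measure S) := rfl

theorem jbAvg_succ {S : Type*} [MeasurableSpace S] (ν : ℕ → ProbabilityMeasure S) (n : ℕ) :
    (jbAvg ν (n + 1) : Measure S) =
      ((((n + 2 : ℕ) : ℝ≥0)⁻¹ : ℝ≥0) : ℝ≥0∞) • (ν (n + 1) : Measure S) +
      (1 - ((((n + 2 : ℕ) : ℝ≥0)⁻¹ : ℝ≥0) : ℝ≥0∞)) • (jbAvg ν n : Measure S) := by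
  have h2 : ((((n + 2 : ℕ) : ℝ≥0)⁻¹ : ℝ≥0) : ℝ≥0∞) = ((n + 2 : ℕ) : ℝ≥0∞)⁻¹ := by
    rw [ENNReal.coe_inv (by positivity)]; simp
  have h1 : (1 - ((n + 2 : ℕ) : ℝ≥0∞)⁻¹) * ((n + 1 : ℕ) : ℝ≥0∞)⁻¹ = ((n + 2 : ℕ) : ℝ≥0∞)⁻¹ := by
    have h3 : (1 : ℝ≥0∞) - ((n + 2 : ℕ) : ℝ≥0∞)⁻¹ = ((n + 1 : ℕ) : ℝ≥0∞) * ((n + 2 : ℕ) : ℝ≥0∞)⁻¹ := by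
      apply ENNReal.sub_eq_of_eq_add (by simp)
      rw [← add_one_mul, ← Nat.cast_add_one]
      exact (ENNReal.mul_inv_cancel (by simp) (by finiteness)).symm
    rw [h3, mul_right_comm, ENNReal.mul_inv_cancel (by simp) (by finiteness), one_mul]
  rw [h2, jbAvg_coe, jbAvg_coe, smul_smul, h1, Finset.sum_range_succ _ (n + 1), smul_add, add_comm]

theorem jbAvg_convex {S : Type*} [TopologicalSpace S] [MeasurableSpace S]
    (f : ProbabilityMeasure S → ℝ)
    (hfconv : ∀ (μ ν ρ : ProbabilityMeasure S) (t : ℝ≥0), t ≤ 1 →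
      (ρ : Measure S) = (t : ℝ≥0∞) • (μ : Measure S) + (1 - (t : ℝ≥0∞)) • (ν : Measure S) →
      f ρ ≤ (t : ℝ) * f μ + (1 - (t : ℝ)) * f ν)
    (ν : ℕ → ProbabilityMeasure S) (n : ℕ) :
    f (jbAvg ν n) ≤ (∑ i ∈ Finset.range (n + 1), f (ν i)) / ((n + 1 : ℕ) : ℝ) := by
  induction n with
  | zero =>
    have : jbAvg ν 0 = ν 0 := by
      apply Subtype.ext
      change (jbAvg ν 0 : Measure S) = (ν 0 : Measure S)
      rw [jbAvg_coe]; simp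
    simp [this]
  | succ n ih =>
    have h := hfconv (ν (n + 1)) (jbAvg ν n) (jbAvg ν (n + 1)) (((n + 2 : ℕ) : ℝ≥0)⁻¹)
      (inv_le_one_of_one_le₀ (by push_cast; exact le_add_left one_le_two)) (jbAvg_succ ν n)
    refine h.trans ?_
    rw [Finset.sum_range_succ _ (n + 1)]
    push_cast at ih ⊢
    have hn : (0 : ℝ) < (n : ℝ) + 1 := by positivity
    have hn2 : (0 : ℝ) < (n : ℝ) + 2 := by positivity
    have e : 1 - ((n : ℝ) + 2)⁻¹ = ((n : ℝ) + 1) / ((n : ℝ) + 2) := by field_simp; ring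
    rw [le_div_iff₀ hn] at ih
    rw [e, show (n : ℝ) + 1 + 1 = n + 2 by ring, le_div_iff₀ hn2]
    field_simp
    linarith

theorem jbAvg_real {S : Type*} [MeasurableSpace S] (ν : ℕ → ProbabilityMeasure S) (n : ℕ)
    (s : Set S) :
    ((jbAvg ν n : Measure S) s).toReal =
      (∑ i ∈ Finset.range (n + 1), ((ν i : Measure S) s).toReal) / ((n + 1 : ℕ) : ℝ) := by
  rw [jbAvg_coe]
  simp only [Measure.smul_apply, Measure.finsetSum_apply, smul_eq_mul, ENNReal.toReal_mul]
  rw [ENNReal.toReal_sum (by intros; finiteness), ENNReal.toReal_inv, ENNReal.toReal_natCast]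
  ring

theorem jensen_inequality_for_barycenter
    {S : Type*} [TopologicalSpace S] [PolishSpace S] [MeasurableSpace S] [BorelSpace S]
    (𝕄 : ProbabilityMeasure (ProbabilityMeasure S))
    (f : ProbabilityMeasure S → ℝ)
    (hfc : Continuous f) (hfb : ∃ C : ℝ, ∀ μ, |f μ| ≤ C)
    (hfconv : ∀ (μ ν ρ : ProbabilityMeasure S) (t : ℝ≥0), t ≤ 1 →
      (ρ : Measure S) = (t : ℝ≥0∞) • (μ : Measure S) + (1 - (t : ℝ≥0∞)) • (ν : Measure S) →
      f ρ ≤ (t : ℝ) * f μ + (1 - (t : ℝ)) * f ν)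
    (b : ProbabilityMeasure S)
    (hb : ∀ A : Set S, MeasurableSet A →
      (b : Measure S) A = ∫⁻ ν, (ν : Measure S) A
        ∂(𝕄 : Measure (ProbabilityMeasure S))) :
    f b ≤ ∫ ν, f ν ∂(𝕄 : Measure (ProbabilityMeasure S)) := by
  have : BorelSpace (ProbabilityMeasure S) := jb_borel
  let B := TopologicalSpace.countableBasis S
  let P : Set (Set S) := (fun T : Set (Set S) => ⋂₀ T) '' {T | T.Finite ∧ T ⊆ B}
  have hPc : P.Countable :=
    (Set.countable_ofPred_finite_subset (TopologicalSpace.countable_countableBasis S)).image _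
  have hPpi : IsPiSystem P := by
    rintro _ ⟨T, hT, rfl⟩ _ ⟨U, hU, rfl⟩ _
    exact ⟨T ∪ U, ⟨hT.1.union hU.1, Set.union_subset hT.2 hU.2⟩, Set.sInter_union T U⟩
  have hPo : ∀ s ∈ P, IsOpen s := by
    rintro _ ⟨T, hT, rfl⟩
    exact hT.1.isOpen_sInter fun t ht => TopologicalSpace.isOpen_of_mem_countableBasis (hT.2 ht)
  have hPn : ∀ u : Set S, IsOpen u → ∀ x ∈ u, ∃ s ∈ P, s ∈ 𝓝 x ∧ s ⊆ u := by
    intro u hu x hx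
    obtain ⟨v, hv, hxv, hvu⟩ :=
      (TopologicalSpace.isBasis_countableBasis S).exists_subset_of_mem_open hx hu
    exact ⟨v, ⟨{v}, ⟨Set.finite_singleton v, by simpa using hv⟩, by simp⟩,
      (TopologicalSpace.isOpen_of_mem_countableBasis hv).mem_nhds hxv, hvu⟩
  have h1 := jb_slln (𝕄 : Measure (ProbabilityMeasure S)) f hfc.measurable hfb
  have h2 : ∀ᵐ ω ∂(Measure.infinitePi
      (fun _ : ℕ => (𝕄 : Measure (ProbabilityMeasure S)))), ∀ s ∈ P,
      Tendsto (fun n : ℕ => (∑ i ∈ Finset.range n, ((ω i : Measure S) s).toReal) / n) atTop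
        (𝓝 ((b : Measure S) s).toReal) := by
    rw [ae_ball_iff hPc]
    intro s hs
    have hm := jb_meas_open (hPo s hs)
    have h := jb_slln (𝕄 : Measure (ProbabilityMeasure S))
      (fun ν => ((ν : Measure S) s).toReal) hm.ennreal_toReal
      ⟨1, fun ν => by
        rw [abs_of_nonneg ENNReal.toReal_nonneg]
        exact ENNReal.toReal_le_of_le_ofReal zero_le_one (by simpa using prob_le_one)⟩
    rw [integral_toReal hm.aemeasurable (Eventually.of_forall fun ν => measure_lt_top _ _),
      ← hb s (hPo s hs).measurableSet] at h
    exact h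
  obtain ⟨ω, hω1, hω2⟩ := (h1.and h2).exists
  have hconv : Tendsto (fun n => jbAvg ω n) atTop (𝓝 b) := by
    apply hPpi.tendsto_probabilityMeasure_of_tendsto_of_mem
      (fun s hs => (hPo s hs).measurableSet) hPn
    intro s hs
    rw [← NNReal.tendsto_coe]
    have h := (tendsto_add_atTop_iff_nat 1).2 (hω2 s hs)
    refine h.congr fun n => ?_
    exact (jbAvg_real ω n s).symm
  exact le_of_tendsto_of_tendsto' ((hfc.tendsto b).comp hconv)
    ((tendsto_add_atTop_iff_nat 1).2 hω1) fun n => jbAvg_convex f hfconv ω n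
end

section
/- Let S be a Polish space and let 𝕄, 𝕄′ be Borel probability measures on P(S). If ∫ f(ν) 𝕄(dν) = ∫ f(ν) 𝕄′(dν) for every bounded continuous convex function f : P(S) → ℝ, then 𝕄 = 𝕄′. In particular, the relation 𝕄 ≺ 𝕄′ (meaning ∫ f d𝕄 ≤ ∫ f d𝕄′ for all bounded continuous convex f) is antisymmetric: 𝕄 ≺ 𝕄′ and 𝕄′ ≺ 𝕄 imply 𝕄 = 𝕄′. -/
open MeasureTheory Filter Topology ENNReal
open scoped NNReal

instance probabilityMeasureBorelSpace
    {S : Type*} [MeasurableSpace S] [TopologicalSpace S] [OpensMeasurableSpace S] :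
    BorelSpace (ProbabilityMeasure S) := ⟨rfl⟩

section helpers

open BoundedContinuousFunction

/-- The push-forward along an embedding is inducing for the weak topology. -/
lemma isInducing_probMap {S K : Type*} [TopologicalSpace S] [PolishSpace S]
    [MeasurableSpace S] [BorelSpace S] [TopologicalSpace K] [PolishSpace K]
    [MeasurableSpace K] [BorelSpace K] (e : S → K) (he : IsEmbedding e) :
    IsInducing (fun ν : ProbabilityMeasure S ↦
      ν.map (he.continuous.measurable.aemeasurable (μ := (ν : Measure S)))) := by
  rw [isInducing_iff_nhds]
  intro μ
  apply le_antisymm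
  · exact (ProbabilityMeasure.continuous_map he.continuous).continuousAt.tendsto.le_comap
  · have key : Tendsto (fun ν : ProbabilityMeasure S ↦ ν)
        (comap (fun ν : ProbabilityMeasure S ↦
          ν.map (he.continuous.measurable.aemeasurable (μ := (ν : Measure S))))
          (𝓝 (μ.map he.continuous.measurable.aemeasurable))) (𝓝 μ) := by
      apply tendsto_of_forall_isOpen_le_liminf'
      intro G hG
      obtain ⟨V, hV, rfl⟩ := he.isInducing.isOpen_iff.1 hG
      have h1 := ProbabilityMeasure.le_liminf_measure_open_of_tendsto
        (tendsto_comap (f := (fun ν : ProbabilityMeasure S ↦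
          ν.map (he.continuous.measurable.aemeasurable (μ := (ν : Measure S)))))
          (x := 𝓝 (μ.map he.continuous.measurable.aemeasurable))) hV
      simpa only [ProbabilityMeasure.toMeasure_map,
        Measure.map_apply he.continuous.measurable hV.measurableSet] using h1
    exact key

/-- The bounded continuous function `μ ↦ exp (∫ g dμ)`. -/
noncomputable def expBcf {K : Type*} [TopologicalSpace K] [CompactSpace K] [PolishSpace K]
    [MeasurableSpace K] [BorelSpace K] (g : K →ᵇ ℝ) : ProbabilityMeasure K →ᵇ ℝ :=
  BoundedContinuousFunction.mkOfCompact
    ⟨fun μ ↦ Real.exp (∫ x, g x ∂(μ : Measure K)),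
      Real.continuous_exp.comp
        (ProbabilityMeasure.continuous_integral_boundedContinuousFunction g)⟩

lemma expBcf_apply {K : Type*} [TopologicalSpace K] [CompactSpace K] [PolishSpace K]
    [MeasurableSpace K] [BorelSpace K] (g : K →ᵇ ℝ) (μ : ProbabilityMeasure K) :
    expBcf g μ = Real.exp (∫ x, g x ∂(μ : Measure K)) := rfl

/-- The multiplicative monoid of exponentials. -/
noncomputable def expMonoid (K : Type*) [TopologicalSpace K] [CompactSpace K] [PolishSpace K]
    [MeasurableSpace K] [BorelSpace K] : Submonoid (ProbabilityMeasure K →ᵇ ℝ) where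
  carrier := Set.range expBcf
  one_mem' := ⟨0, by ext μ; simp [expBcf_apply]⟩
  mul_mem' := by
    rintro _ _ ⟨g, rfl⟩ ⟨k, rfl⟩
    refine ⟨g + k, ?_⟩
    ext μ
    simp only [expBcf_apply, BoundedContinuousFunction.mul_apply,
      BoundedContinuousFunction.add_apply]
    rw [integral_add (g.integrable _) (k.integrable _), Real.exp_add]

/-- The algebra of exponentials. -/
noncomputable def expAlg (K : Type*) [TopologicalSpace K] [CompactSpace K] [PolishSpace K]
    [MeasurableSpace K] [BorelSpace K] : StarSubalgebra ℝ (ProbabilityMeasure K →ᵇ ℝ) where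
  toSubalgebra := Algebra.adjoin ℝ (expMonoid K : Set (ProbabilityMeasure K →ᵇ ℝ))
  star_mem' := by
    intro f hf
    have : star f = f := by ext μ; simp
    rw [this]; exact hf

lemma ext_of_exp {K : Type*} [TopologicalSpace K] [CompactSpace K] [PolishSpace K]
    [MeasurableSpace K] [BorelSpace K] {P P' : Measure (ProbabilityMeasure K)}
    [IsFiniteMeasure P] [IsFiniteMeasure P']
    (h : ∀ g : K →ᵇ ℝ, ∫ μ, expBcf g μ ∂P = ∫ μ, expBcf g μ ∂P') : P = P' := by
  have : PolishSpace (ProbabilityMeasure K) := by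
    let := TopologicalSpace.metrizableSpaceMetric (ProbabilityMeasure K)
    infer_instance
  refine ext_of_forall_mem_subalgebra_integral_eq_of_polish (𝕜 := ℝ) (A := expAlg K) ?_ ?_
  · intro μ ν hne
    by_contra hcon
    apply hne
    apply Subtype.ext
    apply ext_of_forall_integral_eq_of_IsFiniteMeasure (μ := (μ : Measure K)) (ν := (ν : Measure K))
    intro g
    by_contra hg
    apply hcon
    refine ⟨expBcf g, ⟨toContinuousMapStarₐ ℝ (expBcf g),
      ⟨expBcf g, Algebra.subset_adjoin ⟨g, rfl⟩, rfl⟩, rfl⟩, ?_⟩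
    rw [expBcf_apply, expBcf_apply]
    exact fun hh ↦ hg (Real.exp_injective hh)
  · intro f hf
    have hf' : f ∈ Submodule.span ℝ (expMonoid K : Set (ProbabilityMeasure K →ᵇ ℝ)) := by
      have h1 : f ∈ Subalgebra.toSubmodule
        (Algebra.adjoin ℝ (expMonoid K : Set (ProbabilityMeasure K →ᵇ ℝ))) := hf
      rwa [Algebra.adjoin_eq_span, Submonoid.closure_eq] at h1
    clear hf
    induction hf' using Submodule.span_induction with
    | mem x hx => obtain ⟨g, rfl⟩ := hx; exact h g
    | zero => simp
    | add x y _ _ hx hy =>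
      simp only [BoundedContinuousFunction.add_apply]
      rw [integral_add (x.integrable _) (y.integrable _),
        integral_add (x.integrable _) (y.integrable _), hx, hy]
    | smul a x _ hx =>
      simp only [BoundedContinuousFunction.coe_smul]
      rw [integral_smul, integral_smul, hx]

end helpers

/-- Bounded continuous convex functions are measure-determining on `P(S)` for Polish
`S`: if `∫ f d𝕄 = ∫ f d𝕄'` for every bounded continuous convex `f : P(S) → ℝ`, then
`𝕄 = 𝕄'`. In particular, the convex ordering `≺` is antisymmetric. -/
theorem eq_of_integral_convex_eq
    {S : Type*} [TopologicalSpace S] [PolishSpace S] [MeasurableSpace S] [BorelSpace S]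
    (𝕄 𝕄' : ProbabilityMeasure (ProbabilityMeasure S))
    (h : ∀ f : ProbabilityMeasure S → ℝ, Continuous f → (∃ C : ℝ, ∀ μ, |f μ| ≤ C) →
      (∀ (μ ν ρ : ProbabilityMeasure S) (t : ℝ≥0), t ≤ 1 →
        (ρ : Measure S) = (t : ℝ≥0∞) • (μ : Measure S) + (1 - (t : ℝ≥0∞)) • (ν : Measure S) →
        f ρ ≤ (t : ℝ) * f μ + (1 - (t : ℝ)) * f ν) →
      ∫ ν, f ν ∂(𝕄 : Measure (ProbabilityMeasure S)) =
        ∫ ν, f ν ∂(𝕄' : Measure (ProbabilityMeasure S))) :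
    𝕄 = 𝕄' := by
  obtain ⟨e, he⟩ : ∃ F : S → ℕ → unitInterval, IsEmbedding F := by
    let := TopologicalSpace.metrizableSpaceMetric S
    exact Metric.PiNatEmbed.exists_embedding_to_hilbert_cube
  have hind := isInducing_probMap e he
  set Φ : ProbabilityMeasure S → ProbabilityMeasure (ℕ → unitInterval) := fun ν ↦
      ν.map (he.continuous.measurable.aemeasurable (μ := (ν : Measure S))) with hΦ
  have hm : Measurable Φ := hind.continuous.measurable
  have hmap : (𝕄 : Measure (ProbabilityMeasure S)).map Φ =
      (𝕄' : Measure (ProbabilityMeasure S)).map Φ := by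
    have i1 := Measure.isProbabilityMeasure_map (μ := (𝕄 : Measure (ProbabilityMeasure S)))
      hm.aemeasurable
    have i2 := Measure.isProbabilityMeasure_map (μ := (𝕄' : Measure (ProbabilityMeasure S)))
      hm.aemeasurable
    apply ext_of_exp
    intro g
    rw [integral_map hm.aemeasurable (expBcf g).continuous.aestronglyMeasurable,
      integral_map hm.aemeasurable (expBcf g).continuous.aestronglyMeasurable]
    refine h (fun ν ↦ expBcf g (Φ ν)) ((expBcf g).continuous.comp hind.continuous)
      ⟨‖expBcf g‖, fun μ ↦ (expBcf g).norm_coe_le_norm (Φ μ)⟩ ?_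
    intro μ ν ρ t ht hρ
    have hint : ∀ κ : ProbabilityMeasure S, ∫ x, g x ∂(Φ κ : Measure (ℕ → unitInterval)) =
        ∫ x, g (e x) ∂(κ : Measure S) := fun κ ↦ by
      rw [hΦ, ProbabilityMeasure.toMeasure_map, integral_map he.continuous.measurable.aemeasurable
        g.continuous.aestronglyMeasurable]
    have hi : ∀ κ : ProbabilityMeasure S, Integrable (fun x ↦ g (e x)) (κ : Measure S) := fun κ ↦
      (g.compContinuous ⟨e, he.continuous⟩).integrable _
    simp only [expBcf_apply, hint]
    have h1 : (1 - (t : ℝ≥0∞)) ≠ ∞ := by simp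
    have h2 : (1 - (t : ℝ≥0∞)).toReal = 1 - (t : ℝ) := by
      rw [ENNReal.toReal_sub_of_le (by exact_mod_cast ht) (by simp)]; simp
    rw [hρ, integral_add_measure ((hi μ).smul_measure (by simp)) ((hi ν).smul_measure h1),
      integral_smul_measure, integral_smul_measure, h2, ENNReal.coe_toReal]
    have ht' : (t : ℝ) ≤ 1 := by exact_mod_cast ht
    exact convexOn_exp.2 (Set.mem_univ _) (Set.mem_univ _) t.2 (sub_nonneg.2 ht') (by ring)
  apply Subtype.ext
  change (𝕄 : Measure (ProbabilityMeasure S)) = (𝕄' : Measure (ProbabilityMeasure S))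
  refine ext_of_generate_finite {s | IsOpen s} (BorelSpace.measurable_eq)
    isPiSystem_isOpen ?_ (by rw [measure_univ, measure_univ])
  intro U hU
  obtain ⟨V, hV, rfl⟩ := hind.isOpen_iff.1 hU
  have := congrArg (fun m : Measure _ ↦ m V) hmap
  simpa only [Measure.map_apply hm hV.measurableSet] using! this
end

section
/- Let 𝕄 be a Π-invariant probability measure on P(E). Then: (i) the barycenter of 𝕄 equals λ, i.e. ∫ ν({i}) 𝕄(dν) = λ_i for every i ∈ E; and (ii) for every bounded continuous convex function f : P(E) → ℝ and every n ≥ 0, Π^n f(λ) ≤ ∫ f(ν) 𝕄(dν) ≤ Σ_{x∈E} λ_x · Π^n f(δ_x), where Π^n f is the n-fold iterate of Π applied to f and δ_x is the point mass at x. -/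
open MeasureTheory Filter Topology ENNReal

/-- `P(E)`: probability vectors on a countable set `E`, with the topology of
pointwise (equivalently, weak) convergence inherited from `E → ℝ`. -/
abbrev ProbVec (E : Type*) := {p : E → ℝ // (∀ i, 0 ≤ p i) ∧ HasSum p 1}

/-- Row-vector/matrix product `(p M(y))_j = ∑_i p_i M_{ij}(y)`. -/
noncomputable def rowMul {E F : Type*} (M : F → E → E → ℝ) (p : E → ℝ) (y : F) : E → ℝ :=
  fun j => ∑' i, p i * M y i j

/-- Iterated product `p M(y₁)⋯M(yₙ)` along a list of observations. -/
noncomputable def rowIter {E F : Type*} (M : F → E → E → ℝ) (p : E → ℝ) (ys : List F) : E → ℝ :=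
  ys.foldl (rowMul M) p

/-- `p 1 = ∑_j p_j`. -/
noncomputable def rowTot {E : Type*} (p : E → ℝ) : ℝ := ∑' j, p j

/-- One step of the filter: `μ ↦ μM(y)/(μM(y)1)` (junk value `μ` when undefined). -/
noncomputable def filterStep {E F : Type*} (M : F → E → E → ℝ) (μ : ProbVec E) (y : F) :
    ProbVec E := by
  classical
  exact if h : ∃ ν : ProbVec E, ∀ j,
      (ν : E → ℝ) j * rowTot (rowMul M (μ : E → ℝ) y) = rowMul M (μ : E → ℝ) y j
    then h.choose else μ

/-- The filter `μM(y₁)⋯M(yₙ)/(μM(y₁)⋯M(yₙ)1)` (junk value `μ` when undefined). -/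
noncomputable def filterList {E F : Type*} (M : F → E → E → ℝ) (μ : ProbVec E) (ys : List F) :
    ProbVec E := by
  classical
  exact if h : ∃ ν : ProbVec E, ∀ j,
      (ν : E → ℝ) j * rowTot (rowIter M (μ : E → ℝ) ys) = rowIter M (μ : E → ℝ) ys j
    then h.choose else μ

/-- The filter `π_n^μ(y)` as a function of the observation path `y : ℕ → F`
(the coordinate `y k` represents the observation `y_{k+1}`). -/
noncomputable def filterSeq {E F : Type*} (M : F → E → E → ℝ) (μ : ProbVec E) (y : ℕ → F)
    (n : ℕ) : ProbVec E :=
  filterList M μ (List.ofFn fun k : Fin n => y k)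

/-- The filter transition kernel `Π`, acting on functions:
`Πf(μ) = ∫ f(μM(y)/(μM(y)1)) ⬝ (μM(y)1) φ(dy)`. -/
noncomputable def filterKernel {E F : Type*} [MeasurableSpace F] (M : F → E → E → ℝ)
    (φ : Measure F) (f : ProbVec E → ℝ) (μ : ProbVec E) : ℝ :=
  ∫ y, f (filterStep M μ y) * rowTot (rowMul M (μ : E → ℝ) y) ∂φ

/-- Bounded continuous real functions on `P(E)`. -/
def IsBddCont {E : Type*} (f : ProbVec E → ℝ) : Prop :=
  Continuous f ∧ ∃ C : ℝ, ∀ μ, |f μ| ≤ C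

/-- A probability measure `𝕄` on `P(E)` is `Π`-invariant if `∫ Πf d𝕄 = ∫ f d𝕄`
for every bounded continuous `f`. -/
def IsPiInvariant {E F : Type*} [MeasurableSpace F] (M : F → E → E → ℝ) (φ : Measure F)
    (𝕄 : ProbabilityMeasure (ProbVec E)) : Prop :=
  ∀ f : ProbVec E → ℝ, IsBddCont f →
    ∫ μ, filterKernel M φ f μ ∂(𝕄 : Measure (ProbVec E)) =
      ∫ μ, f μ ∂(𝕄 : Measure (ProbVec E))

/-- The signal transition matrix `P_{ij} = ∫ M_{ij}(y) φ(dy)`. -/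
noncomputable def transMat {E F : Type*} [MeasurableSpace F] (M : F → E → E → ℝ)
    (φ : Measure F) : E → E → ℝ :=
  fun i j => ∫ y, M y i j ∂φ

/-- Powers of a transition matrix on a countable state space. -/
noncomputable def matPow {E : Type*} [DecidableEq E] (P : E → E → ℝ) : ℕ → E → E → ℝ
  | 0 => fun i j => if i = j then 1 else 0
  | n + 1 => fun i j => ∑' k, matPow P n i k * P k j

/-- Convex combination `t•p + (1-t)•q` of two probability vectors. -/
noncomputable def pvCombo {E : Type*} (t : ℝ) (ht0 : 0 ≤ t) (ht1 : t ≤ 1)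
    (p q : ProbVec E) : ProbVec E :=
  ⟨fun i => t * (p : E → ℝ) i + (1 - t) * (q : E → ℝ) i,
    fun i => add_nonneg (mul_nonneg ht0 (p.2.1 i)) (mul_nonneg (by linarith) (q.2.1 i)),
    by
      have h1 : HasSum (fun i => t * (p : E → ℝ) i) (t * 1) := p.2.2.mul_left t
      have h2 : HasSum (fun i => (1 - t) * (q : E → ℝ) i) ((1 - t) * 1) :=
        q.2.2.mul_left (1 - t)
      have h3 := h1.add h2
      have h4 : t * 1 + (1 - t) * 1 = 1 := by ring
      rw [h4] at h3
      exact h3⟩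

/-- Convexity of a real function on `P(E)`. -/
def IsConvexFn {E : Type*} (f : ProbVec E → ℝ) : Prop :=
  ∀ (t : ℝ) (ht0 : 0 ≤ t) (ht1 : t ≤ 1) (p q : ProbVec E),
    f (pvCombo t ht0 ht1 p q) ≤ t * f p + (1 - t) * f q

/-- The point mass `δ_x ∈ P(E)`. -/
noncomputable def deltaPV {E : Type*} [DecidableEq E] (x : E) : ProbVec E :=
  ⟨fun i => if i = x then 1 else 0,
    fun i => by by_cases h : i = x <;> simp [h],
    hasSum_ite_eq x 1⟩


lemma pv_summable {E : Type*} (μ : ProbVec E) : Summable (μ : E → ℝ) := μ.2.2.summable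

lemma pv_tsum {E : Type*} (μ : ProbVec E) : ∑' i, (μ : E → ℝ) i = 1 := μ.2.2.tsum_eq

lemma pv_le_one {E : Type*} (μ : ProbVec E) (i : E) : (μ : E → ℝ) i ≤ 1 := by
  exact ((pv_summable μ).le_tsum i (fun j _ => μ.2.1 j)).trans_eq (pv_tsum μ)

def RowBdd {E F : Type*} (M : F → E → E → ℝ) : Prop :=
  (∀ y i j, 0 ≤ M y i j) ∧ ∀ y, ∃ C : ℝ, ∀ (i : E) (s : Finset E), ∑ j ∈ s, M y i j ≤ C

section basics
variable {E F : Type*} {M : F → E → E → ℝ}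

lemma row_summable (h : RowBdd M) (y : F) (i : E) : Summable (M y i) := by
  obtain ⟨C, hC⟩ := h.2 y
  exact summable_of_sum_le (h.1 y i) (hC i)

lemma row_bound (h : RowBdd M) (y : F) : ∃ C : ℝ, ∀ i, ∑' j, M y i j ≤ C := by
  obtain ⟨C, hC⟩ := h.2 y
  exact ⟨C, fun i => (row_summable h y i).tsum_le_of_sum_le (hC i)⟩

lemma row_entry_le (h : RowBdd M) (y : F) (i j : E) : M y i j ≤ ∑' j, M y i j :=
  (row_summable h y i).le_tsum j (fun k _ => h.1 y i k)

lemma pv_mul_summable (μ : ProbVec E) {c : E → ℝ} (C : ℝ) (hc : ∀ i, |c i| ≤ C) :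
    Summable (fun i => (μ : E → ℝ) i * c i) := by
  refine Summable.of_norm_bounded ((pv_summable μ).mul_right C) (fun i => ?_)
  rw [norm_mul, Real.norm_of_nonneg (μ.2.1 i)]
  exact mul_le_mul_of_nonneg_left (hc i) (μ.2.1 i)

lemma summable2 (h : RowBdd M) (μ : ProbVec E) (y : F) :
    Summable (fun x : E × E => (μ : E → ℝ) x.1 * M y x.1 x.2) := by
  obtain ⟨C, hC⟩ := row_bound h y
  refine (summable_prod_of_nonneg (fun x => mul_nonneg (μ.2.1 _) (h.1 _ _ _))).2 ⟨fun i => ?_, ?_⟩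
  · exact (row_summable h y i).mul_left ((μ : E → ℝ) i)
  · simp only [tsum_mul_left]
    refine pv_mul_summable μ C (fun i => ?_)
    rw [abs_of_nonneg (tsum_nonneg (h.1 y i))]
    exact hC i

lemma rowMul_nonneg (h : RowBdd M) (μ : ProbVec E) (y : F) (j : E) :
    0 ≤ rowMul M (μ : E → ℝ) y j :=
  tsum_nonneg fun i => mul_nonneg (μ.2.1 _) (h.1 _ _ _)

lemma rowTot_nonneg (h : RowBdd M) (μ : ProbVec E) (y : F) :
    0 ≤ rowTot (rowMul M (μ : E → ℝ) y) :=
  tsum_nonneg fun i => rowMul_nonneg h μ y i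

lemma rowMul_summand (h : RowBdd M) (μ : ProbVec E) (y : F) (j : E) :
    Summable (fun i => (μ : E → ℝ) i * M y i j) :=
  (summable2 h μ y).prod_symm.prod_factor j

lemma rowMul_summable (h : RowBdd M) (μ : ProbVec E) (y : F) :
    Summable (rowMul M (μ : E → ℝ) y) :=
  (summable2 h μ y).prod_symm.prod

lemma rowTot_eq (h : RowBdd M) (μ : ProbVec E) (y : F) :
    rowTot (rowMul M (μ : E → ℝ) y) = ∑' i, (μ : E → ℝ) i * ∑' j, M y i j := by
  unfold rowTot rowMul
  rw [Summable.tsum_comm (f := fun i j => (μ : E → ℝ) i * M y i j) (summable2 h μ y)]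
  simp only [tsum_mul_left]

lemma rowMul_le_tot (h : RowBdd M) (μ : ProbVec E) (y : F) (j : E) :
    rowMul M (μ : E → ℝ) y j ≤ rowTot (rowMul M (μ : E → ℝ) y) :=
  (rowMul_summable h μ y).le_tsum j (fun k _ => rowMul_nonneg h μ y k)

lemma entry_le_tot (h : RowBdd M) (μ : ProbVec E) (y : F) (i j : E) :
    (μ : E → ℝ) i * M y i j ≤ rowTot (rowMul M (μ : E → ℝ) y) :=
  ((rowMul_summand h μ y j).le_tsum i
    (fun k _ => mul_nonneg (μ.2.1 _) (h.1 _ _ _))).trans (rowMul_le_tot h μ y j)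

lemma step_mul (h : RowBdd M) (μ : ProbVec E) (y : F) (j : E) :
    (filterStep M μ y : E → ℝ) j * rowTot (rowMul M (μ : E → ℝ) y) = rowMul M (μ : E → ℝ) y j := by
  have hex : ∃ ν : ProbVec E, ∀ j,
      (ν : E → ℝ) j * rowTot (rowMul M (μ : E → ℝ) y) = rowMul M (μ : E → ℝ) y j := by
    by_cases h0 : rowTot (rowMul M (μ : E → ℝ) y) = 0
    · refine ⟨μ, fun j => ?_⟩
      have h1 := rowMul_le_tot h μ y j
      have h2 := rowMul_nonneg h μ y j
      rw [h0] at h1 ⊢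
      linarith
    · refine ⟨⟨fun j => rowMul M (μ : E → ℝ) y j / rowTot (rowMul M (μ : E → ℝ) y), fun j =>
        div_nonneg (rowMul_nonneg h μ y j) (rowTot_nonneg h μ y), ?_⟩, fun j => ?_⟩
      · have := (rowMul_summable h μ y).hasSum.div_const (rowTot (rowMul M (μ : E → ℝ) y))
        rwa [← rowTot, div_self h0] at this
      · exact div_mul_cancel₀ _ h0
  unfold filterStep
  rw [dif_pos hex]
  exact hex.choose_spec j

lemma rowMul_combo (h : RowBdd M) (t : ℝ) (ht0 : 0 ≤ t) (ht1 : t ≤ 1) (p q : ProbVec E) (y : F)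
    (j : E) : rowMul M (pvCombo t ht0 ht1 p q : E → ℝ) y j
      = t * rowMul M (p : E → ℝ) y j + (1 - t) * rowMul M (q : E → ℝ) y j := by
  unfold rowMul pvCombo
  rw [← tsum_mul_left, ← tsum_mul_left,
    ← Summable.tsum_add ((rowMul_summand h p y j).mul_left t) ((rowMul_summand h q y j).mul_left _)]
  refine tsum_congr fun i => ?_
  ring

lemma rowTot_combo (h : RowBdd M) (t : ℝ) (ht0 : 0 ≤ t) (ht1 : t ≤ 1) (p q : ProbVec E) (y : F) :
    rowTot (rowMul M (pvCombo t ht0 ht1 p q : E → ℝ) y)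
      = t * rowTot (rowMul M (p : E → ℝ) y) + (1 - t) * rowTot (rowMul M (q : E → ℝ) y) := by
  unfold rowTot
  rw [← tsum_mul_left, ← tsum_mul_left,
    ← Summable.tsum_add ((rowMul_summable h p y).mul_left t) ((rowMul_summable h q y).mul_left _)]
  exact tsum_congr fun j => rowMul_combo h t ht0 ht1 p q y j

lemma integrand_convex (h : RowBdd M) {f : ProbVec E → ℝ} (hf : IsConvexFn f)
    (t : ℝ) (ht0 : 0 ≤ t) (ht1 : t ≤ 1) (p q : ProbVec E) (y : F) :
    f (filterStep M (pvCombo t ht0 ht1 p q) y) *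
      rowTot (rowMul M (pvCombo t ht0 ht1 p q : E → ℝ) y) ≤
    t * (f (filterStep M p y) * rowTot (rowMul M (p : E → ℝ) y)) +
    (1 - t) * (f (filterStep M q y) * rowTot (rowMul M (q : E → ℝ) y)) := by
  have hT := rowTot_combo h t ht0 ht1 p q y
  have hs := step_mul h (pvCombo t ht0 ht1 p q) y
  have hsp := step_mul h p y
  have hsq := step_mul h q y
  have hR := rowMul_combo h t ht0 ht1 p q y
  have hp0 := rowTot_nonneg h p y
  have hq0 := rowTot_nonneg h q y
  have h0 := rowTot_nonneg h (pvCombo t ht0 ht1 p q) y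
  set T := rowTot (rowMul M (pvCombo t ht0 ht1 p q : E → ℝ) y) with hTdef
  set A := rowTot (rowMul M (p : E → ℝ) y)
  set B := rowTot (rowMul M (q : E → ℝ) y)
  have ht1' : 0 ≤ 1 - t := by linarith
  have hA := mul_nonneg ht0 hp0
  have hB := mul_nonneg ht1' hq0
  rcases h0.eq_or_lt with hz | hpos
  · have e1 : t * A = 0 := by linarith
    have e2 : (1 - t) * B = 0 := by linarith
    rw [← hz]
    have e3 : t * (f (filterStep M p y) * A) = f (filterStep M p y) * (t * A) := by ring
    have e4 : (1 - t) * (f (filterStep M q y) * B) = f (filterStep M q y) * ((1 - t) * B) := by ring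
    rw [e3, e4, e1, e2]; simp
  · have hs0 : 0 ≤ t * A / T := by positivity
    have hs1 : t * A / T ≤ 1 := by rw [div_le_one hpos]; linarith
    have heq : filterStep M (pvCombo t ht0 ht1 p q) y
        = pvCombo (t * A / T) hs0 hs1 (filterStep M p y) (filterStep M q y) := by
      apply Subtype.ext
      funext j
      have e : (filterStep M (pvCombo t ht0 ht1 p q) y : E → ℝ) j * T =
        (t * A / T * (filterStep M p y : E → ℝ) j +
          (1 - t * A / T) * (filterStep M q y : E → ℝ) j) * T := by
        rw [hs j, hR j, ← hsp j, ← hsq j]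
        field_simp
        rw [hT]
        ring
      exact mul_right_cancel₀ hpos.ne' e
    have hc := hf (t * A / T) hs0 hs1 (filterStep M p y) (filterStep M q y)
    rw [heq]
    refine (mul_le_mul_of_nonneg_right hc hpos.le).trans (le_of_eq ?_)
    field_simp
    rw [hT]
    ring
end basics

section topo
variable {E : Type*}

lemma pv_abs_sub_summable (a b : ProbVec E) :
    Summable (fun i => |(a : E → ℝ) i - (b : E → ℝ) i|) :=
  ((pv_summable a).sub (pv_summable b)).abs

lemma pv_tendsto_coord {ι : Type*} {l : Filter ι} {a : ι → ProbVec E} {b : ProbVec E} :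
    Tendsto a l (𝓝 b) ↔ ∀ i, Tendsto (fun k => (a k : E → ℝ) i) l (𝓝 ((b : E → ℝ) i)) := by
  rw [tendsto_subtype_rng, tendsto_pi_nhds]

lemma pv_scheffe {ι : Type*} {l : Filter ι} {a : ι → ProbVec E} {b : ProbVec E}
    (h : Tendsto a l (𝓝 b)) :
    Tendsto (fun k => ∑' i, |(a k : E → ℝ) i - (b : E → ℝ) i|) l (𝓝 0) := by
  rw [pv_tendsto_coord] at h
  have h1 : Tendsto (fun k => ∑' i, max ((b : E → ℝ) i - (a k : E → ℝ) i) 0) l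
      (𝓝 (∑' i : E, (0 : ℝ))) := by
    refine tendsto_tsum_of_dominated_convergence (pv_summable b) (fun i => ?_)
      (Eventually.of_forall fun k i => ?_)
    · have := ((tendsto_const_nhds (x := (b : E → ℝ) i)).sub (h i)).max
        (tendsto_const_nhds (x := (0 : ℝ)))
      simpa using this
    · rw [Real.norm_of_nonneg (le_max_right _ _)]
      exact max_le (by linarith [(a k).2.1 i]) (b.2.1 i)
  have h2 : ∀ k, ∑' i, |(a k : E → ℝ) i - (b : E → ℝ) i|
      = 2 * ∑' i, max ((b : E → ℝ) i - (a k : E → ℝ) i) 0 := by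
    intro k
    have hs : Summable (fun i => max ((b : E → ℝ) i - (a k : E → ℝ) i) 0) :=
      Summable.of_nonneg_of_le (fun i => le_max_right _ _)
        (fun i => max_le (by linarith [(a k).2.1 i]) (b.2.1 i)) (pv_summable b)
    have e : ∀ i, |(a k : E → ℝ) i - (b : E → ℝ) i| =
        ((a k : E → ℝ) i - (b : E → ℝ) i) + 2 * max ((b : E → ℝ) i - (a k : E → ℝ) i) 0 := by
      intro i
      rcases le_total ((b : E → ℝ) i) ((a k : E → ℝ) i) with hh | hh
      · rw [abs_of_nonneg (by linarith), max_eq_right (by linarith)]; ring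
      · rw [abs_of_nonpos (by linarith), max_eq_left (by linarith)]; ring
    rw [tsum_congr e, Summable.tsum_add ((pv_summable _).sub (pv_summable _)) (hs.mul_left 2),
      Summable.tsum_sub (pv_summable _) (pv_summable _), pv_tsum, pv_tsum, tsum_mul_left]
    ring
  simp only [h2]
  simpa using h1.const_mul 2

lemma pv_tendsto_mul {ι : Type*} {l : Filter ι} {a : ι → ProbVec E} {b : ProbVec E}
    (h : Tendsto a l (𝓝 b)) {c : E → ℝ} (C : ℝ) (hc : ∀ i, |c i| ≤ C) :
    Tendsto (fun k => ∑' i, (a k : E → ℝ) i * c i) l (𝓝 (∑' i, (b : E → ℝ) i * c i)) := by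
  rw [tendsto_iff_norm_sub_tendsto_zero]
  have h1 := (pv_scheffe h).mul_const C
  rw [zero_mul] at h1
  refine squeeze_zero (fun _ => norm_nonneg _) (fun k => ?_) h1
  rw [← Summable.tsum_sub (pv_mul_summable _ C hc) (pv_mul_summable _ C hc), ← tsum_mul_right]
  refine tsum_of_norm_bounded ((pv_abs_sub_summable (a k) b).mul_right C).hasSum (fun i => ?_)
  rw [← sub_mul, norm_mul, Real.norm_eq_abs, Real.norm_eq_abs]
  exact mul_le_mul_of_nonneg_left (hc i) (abs_nonneg _)

noncomputable def toL1 (μ : ProbVec E) : lp (fun _ : E => ℝ) 1 :=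
  ⟨(μ : E → ℝ), memℓp_gen (by simpa using (pv_summable μ).abs)⟩

lemma toL1_apply (μ : ProbVec E) (i : E) : toL1 μ i = (μ : E → ℝ) i := rfl

lemma l1_norm (v : lp (fun _ : E => ℝ) 1) : ‖v‖ = ∑' i, |v i| := by
  rw [lp.norm_eq_tsum_rpow (by simp)]
  simp

lemma l1_summable (v : lp (fun _ : E => ℝ) 1) : Summable (fun i => |v i|) := by
  have := (memℓp_gen_iff (p := 1) (by simp)).1 (lp.memℓp v)
  simpa using this

noncomputable def evalL1 (i : E) : lp (fun _ : E => ℝ) 1 →L[ℝ] ℝ :=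
  LinearMap.mkContinuous
    { toFun := fun v => v i
      map_add' := fun v w => rfl
      map_smul' := fun c v => rfl } 1 (fun v => by
        rw [one_mul]; exact lp.norm_apply_le_norm one_ne_zero v i)

lemma evalL1_apply (i : E) (v : lp (fun _ : E => ℝ) 1) : evalL1 i v = v i := rfl

lemma toL1_continuous : Continuous (toL1 : ProbVec E → _) := by
  rw [continuous_iff_continuousAt]
  intro b
  unfold ContinuousAt
  rw [tendsto_iff_norm_sub_tendsto_zero]
  refine (pv_scheffe (a := id) (b := b) tendsto_id).congr (fun a => ?_)
  rw [l1_norm]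
  rfl

def l1Simplex (E : Type*) : Set (lp (fun _ : E => ℝ) 1) := {v | (∀ i, 0 ≤ v i) ∧ ‖v‖ = 1}

lemma l1Simplex_hasSum {v : lp (fun _ : E => ℝ) 1} (h : v ∈ l1Simplex E) :
    (∀ i, 0 ≤ v i) ∧ HasSum v 1 := by
  refine ⟨h.1, ?_⟩
  have h1 := (l1_summable v).hasSum
  rw [← l1_norm, h.2] at h1
  simpa only [abs_of_nonneg (h.1 _)] using h1

def ofL1 (v : l1Simplex E) : ProbVec E := ⟨fun i => v.1 i, l1Simplex_hasSum v.2⟩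

lemma toL1_mem (μ : ProbVec E) : toL1 μ ∈ l1Simplex E := by
  refine ⟨fun i => μ.2.1 i, ?_⟩
  rw [l1_norm]
  simp only [toL1_apply, abs_of_nonneg (μ.2.1 _)]
  exact pv_tsum μ

lemma ofL1_continuous : Continuous (ofL1 : l1Simplex E → ProbVec E) := by
  refine Continuous.subtype_mk (continuous_pi fun i => ?_) _
  exact (evalL1 i).continuous.comp continuous_subtype_val

lemma l1Simplex_closed : IsClosed (l1Simplex E) := by
  have : l1Simplex E = (⋂ i, {v | 0 ≤ evalL1 i v}) ∩ {v | ‖v‖ = 1} := by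
    ext v; simp [l1Simplex, evalL1_apply]
  rw [this]
  refine IsClosed.inter (isClosed_iInter fun i => ?_) ?_
  · exact isClosed_le continuous_const (evalL1 i).continuous
  · exact isClosed_eq continuous_norm continuous_const

lemma l1_combo_mem {v w : lp (fun _ : E => ℝ) 1} (hv : v ∈ l1Simplex E) (hw : w ∈ l1Simplex E)
    {a b : ℝ} (ha : 0 ≤ a) (hb : 0 ≤ b) (hab : a + b = 1) :
    ∃ ha1 : a ≤ 1, a • v + b • w = toL1 (pvCombo a ha ha1 (ofL1 ⟨v, hv⟩) (ofL1 ⟨w, hw⟩)) := by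
  refine ⟨by linarith, ?_⟩
  obtain rfl : b = 1 - a := by linarith
  rfl

lemma pv_secondCountable [Countable E] : SecondCountableTopology (ProbVec E) :=
  Topology.IsInducing.subtypeVal.secondCountableTopology

open Classical in
/-- Jensen's inequality on the simplex. -/
lemma pv_jensen [Countable E] (Q : Measure (ProbVec E)) [IsProbabilityMeasure Q]
    {f : ProbVec E → ℝ} (hf : IsBddCont f) (hc : IsConvexFn f) (ν : ProbVec E)
    (hν : ∀ i, ∫ μ, (μ : E → ℝ) i ∂Q = (ν : E → ℝ) i) : f ν ≤ ∫ μ, f μ ∂Q := by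
  obtain ⟨hcont, C, hC⟩ := hf
  set G : lp (fun _ : E => ℝ) 1 → ℝ := fun v => if h : v ∈ l1Simplex E then f (ofL1 ⟨v, h⟩) else 0
    with hG
  have hGι : ∀ μ, G (toL1 μ) = f μ := by
    intro μ
    simp only [hG, dif_pos (toL1_mem μ)]
    rfl
  have hGc : ContinuousOn G (l1Simplex E) := by
    rw [continuousOn_iff_continuous_domRestrict]
    have : (l1Simplex E).domRestrict G = f ∘ ofL1 := by
      funext v
      simp only [Set.domRestrict_apply, hG, dif_pos v.2]
      rfl
    rw [this]
    exact hcont.comp ofL1_continuous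
  have hconv : ConvexOn ℝ (l1Simplex E) G := by
    constructor
    · intro v hv w hw a b ha hb hab
      obtain ⟨h1, h2⟩ := l1_combo_mem hv hw ha hb hab
      rw [h2]; exact toL1_mem _
    · intro v hv w hw a b ha hb hab
      obtain ⟨h1, h2⟩ := l1_combo_mem hv hw ha hb hab
      rw [h2, hGι]
      simp only [hG, dif_pos hv, dif_pos hw, smul_eq_mul]
      obtain rfl : b = 1 - a := by linarith
      exact hc _ _ _ _ _
  have hsc : SecondCountableTopology (ProbVec E) := pv_secondCountable
  have hint : Integrable (toL1 : ProbVec E → _) Q := by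
    refine Integrable.of_bound (C := 1) toL1_continuous.aestronglyMeasurable
      (Eventually.of_forall fun μ => (toL1_mem μ).2.le)
  have hfint : Integrable f Q := by
    refine Integrable.of_bound (C := C) hcont.aestronglyMeasurable
      (Eventually.of_forall fun μ => hC μ)
  have hJ := hconv.map_integral_le (f := toL1) (μ := Q) hGc l1Simplex_closed
    (Eventually.of_forall toL1_mem) hint (by
      have : G ∘ toL1 = f := by funext μ; exact hGι μ
      rw [this]; exact hfint)
  have hb : ∫ μ, toL1 μ ∂Q = toL1 ν := by
    apply Subtype.ext
    funext i
    change evalL1 i _ = _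
    rw [← (evalL1 i).integral_comp_comm hint]
    exact hν i
  rw [hb, hGι] at hJ
  simpa only [hGι] using hJ

lemma pv_delta_jensen [Countable E] [DecidableEq E] {f : ProbVec E → ℝ} (hf : IsBddCont f)
    (hc : IsConvexFn f) (ν : ProbVec E) : f ν ≤ ∑' x, (ν : E → ℝ) x * f (deltaPV x) := by
  set Q : Measure (ProbVec E) :=
    Measure.sum (fun x => ENNReal.ofReal ((ν : E → ℝ) x) • Measure.dirac (deltaPV x)) with hQ
  have hp : IsProbabilityMeasure Q := by
    constructor
    rw [hQ, Measure.sum_apply _ MeasurableSet.univ]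
    simp only [Measure.smul_apply, measure_univ, smul_eq_mul, mul_one]
    rw [← ENNReal.ofReal_tsum_of_nonneg ν.2.1 (pv_summable ν), pv_tsum]
    simp
  have hI : ∀ g : ProbVec E → ℝ, ∫ μ, g μ ∂Q = ∑' x, (ν : E → ℝ) x * g (deltaPV x) := by
    intro g
    rw [hQ, integral_sum_dirac (fun _ => ENNReal.ofReal_ne_top)]
    simp only [ENNReal.toReal_ofReal (ν.2.1 _), smul_eq_mul]
  rw [← hI]
  refine pv_jensen Q hf hc ν (fun i => ?_)
  rw [hI]
  simp [deltaPV]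
end topo

section integ
variable {E : Type*} [Countable E] {F : Type*} [MeasurableSpace F] {φ : Measure F}
  {M : F → E → E → ℝ}

lemma meas_tsum {α : Type*} [MeasurableSpace α] {g : E → α → ℝ} (hg : ∀ i, Measurable (g i))
    (hs : ∀ y, Summable (fun i => g i y)) : Measurable (fun y => ∑' i, g i y) := by
  refine measurable_of_tendsto_metrizable' (atTop : Filter (Finset E))
    (f := fun s y => ∑ i ∈ s, g i y) (fun s => Finset.measurable_sum s (fun i _ => hg i)) ?_
  rw [tendsto_pi_nhds]
  exact fun y => (hs y).hasSum

lemma rowMul_meas (hm : ∀ i j, Measurable fun y => M y i j) (h : RowBdd M) (μ : ProbVec E) (j : E) :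
    Measurable (fun y => rowMul M (μ : E → ℝ) y j) :=
  meas_tsum (fun i => (hm i j).const_mul _) (fun y => rowMul_summand h μ y j)

lemma rowTot_meas (hm : ∀ i j, Measurable fun y => M y i j) (h : RowBdd M) (μ : ProbVec E) :
    Measurable (fun y => rowTot (rowMul M (μ : E → ℝ) y)) :=
  meas_tsum (fun j => rowMul_meas hm h μ j) (fun y => rowMul_summable h μ y)

open Classical in
lemma integrand_meas (hm : ∀ i j, Measurable fun y => M y i j) (h : RowBdd M) (μ : ProbVec E)
    {f : ProbVec E → ℝ} (hf : Continuous f) :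
    Measurable (fun y => f (filterStep M μ y) * rowTot (rowMul M (μ : E → ℝ) y)) := by
  have hT := rowTot_meas hm h μ
  set g : F → ProbVec E := fun y =>
    if rowTot (rowMul M (μ : E → ℝ) y) = 0 then μ else filterStep M μ y with hg
  have hgm : Measurable g := by
    refine Measurable.subtype_mk (f := fun y => (g y : E → ℝ)) (measurable_pi_lambda _ fun j => ?_)
    have : (fun y => (g y : E → ℝ) j) = fun y =>
        if rowTot (rowMul M (μ : E → ℝ) y) = 0 then (μ : E → ℝ) j
          else rowMul M (μ : E → ℝ) y j / rowTot (rowMul M (μ : E → ℝ) y) := by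
      funext y
      simp only [hg]
      split_ifs with h0
      · rfl
      · rw [← step_mul h μ y j, mul_div_cancel_right₀ _ h0]
    rw [this]
    exact Measurable.ite (hT (measurableSet_singleton 0)) measurable_const
      ((rowMul_meas hm h μ j).div hT)
  have : (fun y => f (filterStep M μ y) * rowTot (rowMul M (μ : E → ℝ) y)) =
      fun y => f (g y) * rowTot (rowMul M (μ : E → ℝ) y) := by
    funext y
    simp only [hg]
    split_ifs with h0
    · rw [h0]; simp
    · rfl
  rw [this]
  exact (hf.measurable.comp hgm).mul hT

lemma transMat_nonneg (h : RowBdd M) (i j : E) : 0 ≤ transMat M φ i j :=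
  integral_nonneg fun y => h.1 y i j

lemma transMat_le_one (h : RowBdd M) (hP : ∀ i, HasSum (fun j => transMat M φ i j) 1) (i j : E) :
    transMat M φ i j ≤ 1 :=
  le_hasSum (hP i) j (fun k _ => transMat_nonneg h i k)

lemma summable2P (h : RowBdd M) (hP : ∀ i, HasSum (fun j => transMat M φ i j) 1) (μ : ProbVec E) :
    Summable (fun x : E × E => (μ : E → ℝ) x.1 * transMat M φ x.1 x.2) := by
  refine (summable_prod_of_nonneg
    (fun x => mul_nonneg (μ.2.1 _) (transMat_nonneg h _ _))).2 ⟨fun i => ?_, ?_⟩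
  · exact (hP i).summable.mul_left ((μ : E → ℝ) i)
  · simp only [tsum_mul_left, (hP _).tsum_eq, mul_one]
    exact pv_summable μ

/-- the μ-weighted entries are integrable -/
def GoodVec (M : F → E → E → ℝ) (φ : Measure F) (μ : ProbVec E) : Prop :=
  ∀ i j, Integrable (fun y => (μ : E → ℝ) i * M y i j) φ

lemma norm_integral_entry (h : RowBdd M) (μ : ProbVec E) (i j : E) :
    ∫ y, ‖(μ : E → ℝ) i * M y i j‖ ∂φ = (μ : E → ℝ) i * transMat M φ i j := by
  unfold transMat
  rw [← integral_const_mul]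
  exact integral_congr_ae (Eventually.of_forall fun y =>
    Real.norm_of_nonneg (mul_nonneg (μ.2.1 i) (h.1 y i j)))

lemma integral_rowTot (h : RowBdd M)
    (hP : ∀ i, HasSum (fun j => transMat M φ i j) 1) (μ : ProbVec E) (hμ : GoodVec M φ μ) :
    ∫ y, rowTot (rowMul M (μ : E → ℝ) y) ∂φ = 1 := by
  have h1 := hasSum_integral_of_summable_integral_norm (μ := φ)
    (F := fun (x : E × E) y => (μ : E → ℝ) x.1 * M y x.1 x.2) (fun x => hμ x.1 x.2) (by
      simp only [norm_integral_entry h]; exact summable2P h hP μ)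
  have h2 : ∀ y, ∑' x : E × E, (μ : E → ℝ) x.1 * M y x.1 x.2 = rowTot (rowMul M (μ : E → ℝ) y) := by
    intro y
    rw [(summable2 h μ y).tsum_prod, rowTot_eq h]
    simp only [tsum_mul_left]
  simp only [h2] at h1
  rw [← h1.tsum_eq]
  have h3 : ∀ x : E × E, ∫ y, (μ : E → ℝ) x.1 * M y x.1 x.2 ∂φ =
      (μ : E → ℝ) x.1 * transMat M φ x.1 x.2 := fun x => integral_const_mul _ _
  simp only [h3]
  rw [(summable2P h hP μ).tsum_prod]
  simp only [tsum_mul_left, (hP _).tsum_eq, mul_one]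
  exact pv_tsum μ

lemma integrable_rowTot (h : RowBdd M)
    (hP : ∀ i, HasSum (fun j => transMat M φ i j) 1) (μ : ProbVec E) (hμ : GoodVec M φ μ) :
    Integrable (fun y => rowTot (rowMul M (μ : E → ℝ) y)) φ := by
  by_contra hn
  have := integral_rowTot h hP μ hμ
  rw [integral_undef hn] at this
  exact zero_ne_one this

lemma integral_rowTot_bad (hm : ∀ i j, Measurable fun y => M y i j) (h : RowBdd M)
    (μ : ProbVec E) (hμ : ¬ GoodVec M φ μ) :
    ∫ y, rowTot (rowMul M (μ : E → ℝ) y) ∂φ = 0 := by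
  refine integral_undef fun hi => hμ fun i j => ?_
  refine hi.mono' ((hm i j).const_mul _).aestronglyMeasurable (Eventually.of_forall fun y => ?_)
  rw [Real.norm_of_nonneg (mul_nonneg (μ.2.1 i) (h.1 y i j))]
  exact entry_le_tot h μ y i j

lemma kernel_coord (h : RowBdd M)
    (hP : ∀ i, HasSum (fun j => transMat M φ i j) 1) (μ : ProbVec E) (hμ : GoodVec M φ μ) (j : E) :
    filterKernel M φ (fun ν => (ν : E → ℝ) j) μ = ∑' i, (μ : E → ℝ) i * transMat M φ i j := by
  unfold filterKernel
  simp only [step_mul h]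
  have h1 := hasSum_integral_of_summable_integral_norm (μ := φ)
    (F := fun (i : E) y => (μ : E → ℝ) i * M y i j) (fun i => hμ i j) (by
      simp only [norm_integral_entry h]; exact (summable2P h hP μ).prod_symm.prod_factor j)
  have h3 : ∀ i, ∫ y, (μ : E → ℝ) i * M y i j ∂φ =
      (μ : E → ℝ) i * transMat M φ i j := fun x => integral_const_mul _ _
  simp only [h3] at h1
  exact h1.tsum_eq.symm

lemma pv_coord_cont (j : E) : Continuous (fun ν : ProbVec E => (ν : E → ℝ) j) :=
  (continuous_apply j).comp continuous_subtype_val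

lemma pv_coord_bddcont (j : E) : IsBddCont (fun ν : ProbVec E => (ν : E → ℝ) j) :=
  ⟨pv_coord_cont j, 1, fun μ => by rw [abs_of_nonneg (μ.2.1 j)]; exact pv_le_one μ j⟩

lemma bddcont_integrable (Q : Measure (ProbVec E)) [IsFiniteMeasure Q] {f : ProbVec E → ℝ}
    (hf : IsBddCont f) : Integrable f Q := by
  obtain ⟨hc, C, hC⟩ := hf
  exact Integrable.of_bound (C := C) hc.aestronglyMeasurable (Eventually.of_forall fun μ => hC μ)

lemma good_ae (hm : ∀ i j, Measurable fun y => M y i j) (h : RowBdd M)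
    (hP : ∀ i, HasSum (fun j => transMat M φ i j) 1)
    (𝕄 : ProbabilityMeasure (ProbVec E)) (h𝕄 : IsPiInvariant M φ 𝕄) :
    ∀ᵐ μ ∂(𝕄 : Measure (ProbVec E)), GoodVec M φ μ := by
  have h1 := h𝕄 (fun _ => 1) ⟨continuous_const, 1, fun _ => by simp⟩
  set g : ProbVec E → ℝ := filterKernel M φ (fun _ => 1) with hg
  have hg1 : ∀ μ, GoodVec M φ μ → g μ = 1 := by
    intro μ hμ
    simp only [hg, filterKernel, one_mul]
    exact integral_rowTot h hP μ hμ
  have hg0 : ∀ μ, ¬ GoodVec M φ μ → g μ = 0 := by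
    intro μ hμ
    simp only [hg, filterKernel, one_mul]
    exact integral_rowTot_bad hm h μ hμ
  have h2 : ∫ μ, g μ ∂(𝕄 : Measure (ProbVec E)) = 1 := by rw [h1]; simp
  have hi : Integrable g (𝕄 : Measure (ProbVec E)) := by
    by_contra hn
    rw [integral_undef hn] at h2
    exact zero_ne_one h2
  have h3 : ∫ μ, (1 - g μ) ∂(𝕄 : Measure (ProbVec E)) = 0 := by
    rw [integral_sub (integrable_const _) hi, h2]; simp
  have hsub : Integrable (fun μ => 1 - g μ) (𝕄 : Measure (ProbVec E)) :=
    (integrable_const (1 : ℝ)).sub hi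
  rw [integral_eq_zero_iff_of_nonneg _ hsub] at h3
  · filter_upwards [h3] with μ hμ
    by_contra hn
    have := hg0 μ hn
    simp [this] at hμ
  · intro μ
    by_cases hμ : GoodVec M φ μ
    · simp [hg1 μ hμ]
    · simp [hg0 μ hμ]

lemma integral_pv_mul (Q : Measure (ProbVec E)) [IsProbabilityMeasure Q] {c : E → ℝ} (C : ℝ)
    (hc : ∀ i, |c i| ≤ C) (ρ : ProbVec E) (hρ : ∀ i, ∫ μ, (μ : E → ℝ) i ∂Q = (ρ : E → ℝ) i) :
    ∫ μ, ∑' i, (μ : E → ℝ) i * c i ∂Q = ∑' i, (ρ : E → ℝ) i * c i := by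
  have e : ∀ i, ∫ μ, ‖(μ : E → ℝ) i * c i‖ ∂Q = (ρ : E → ℝ) i * |c i| := by
    intro i
    rw [← hρ i, ← integral_mul_const]
    refine integral_congr_ae (Eventually.of_forall fun μ => ?_)
    simp only [norm_mul, Real.norm_eq_abs, abs_of_nonneg (μ.2.1 i)]
  have h1 := hasSum_integral_of_summable_integral_norm (μ := Q)
    (F := fun (i : E) (μ : ProbVec E) => (μ : E → ℝ) i * c i)
    (fun i => (bddcont_integrable Q (pv_coord_bddcont i)).mul_const _) (by
      simp only [e]
      exact pv_mul_summable ρ C (fun i => by rw [abs_abs]; exact hc i))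
  rw [← h1.tsum_eq]
  refine tsum_congr fun i => ?_
  rw [integral_mul_const, hρ]

lemma exists_bary (Q : Measure (ProbVec E)) [IsProbabilityMeasure Q] :
    ∃ ρ : ProbVec E, ∀ i, ∫ μ, (μ : E → ℝ) i ∂Q = (ρ : E → ℝ) i := by
  have hI := fun i => bddcont_integrable Q (pv_coord_bddcont i)
  have e : ∀ i, ∫ μ, ‖(μ : E → ℝ) i‖ ∂Q = ∫ μ, (μ : E → ℝ) i ∂Q := fun i =>
    integral_congr_ae (Eventually.of_forall fun μ => Real.norm_of_nonneg (μ.2.1 i))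
  have hs : Summable (fun i => ∫ μ, (μ : E → ℝ) i ∂Q) := by
    refine summable_of_sum_le (c := 1) (fun i => integral_nonneg fun μ => μ.2.1 i) (fun s => ?_)
    rw [← integral_finsetSum _ (fun i _ => hI i)]
    have : ∫ μ : ProbVec E, ∑ i ∈ s, (μ : E → ℝ) i ∂Q ≤ ∫ μ : ProbVec E, 1 ∂Q := by
      refine integral_mono (integrable_finsetSum _ fun i _ => hI i) (integrable_const _) fun μ => ?_
      exact ((pv_summable μ).sum_le_tsum s (fun i _ => μ.2.1 i)).trans_eq (pv_tsum μ)
    simpa using this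
  have h1 := hasSum_integral_of_summable_integral_norm (μ := Q)
    (F := fun (i : E) (μ : ProbVec E) => (μ : E → ℝ) i) hI (by simpa only [e] using hs)
  simp only [pv_tsum] at h1
  refine ⟨⟨fun i => ∫ μ, (μ : E → ℝ) i ∂Q, fun i => integral_nonneg fun μ => μ.2.1 i, ?_⟩,
    fun i => rfl⟩
  simpa using h1

lemma bary_inv (hm : ∀ i j, Measurable fun y => M y i j) (h : RowBdd M)
    (hP : ∀ i, HasSum (fun j => transMat M φ i j) 1)
    (𝕄 : ProbabilityMeasure (ProbVec E)) (h𝕄 : IsPiInvariant M φ 𝕄) (ρ : ProbVec E)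
    (hρ : ∀ i, ∫ μ, (μ : E → ℝ) i ∂(𝕄 : Measure (ProbVec E)) = (ρ : E → ℝ) i) (j : E) :
    ∑' i, (ρ : E → ℝ) i * transMat M φ i j = (ρ : E → ℝ) j := by
  rw [← hρ j, ← h𝕄 _ (pv_coord_bddcont j), ← integral_pv_mul (𝕄 : Measure (ProbVec E)) 1
    (fun i => by rw [abs_of_nonneg (transMat_nonneg h i j)]; exact transMat_le_one h hP i j) ρ hρ]
  refine integral_congr_ae ?_
  filter_upwards [good_ae hm h hP 𝕄 h𝕄] with μ hμ
  exact (kernel_coord h hP μ hμ j).symm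

lemma matPow_nonneg [DecidableEq E] {P : E → E → ℝ} (hP : ∀ i j, 0 ≤ P i j) (n : ℕ) :
    ∀ i j, 0 ≤ matPow P n i j := by
  induction n with
  | zero => intro i j; simp only [matPow]; split_ifs <;> norm_num
  | succ n ih => intro i j; exact tsum_nonneg fun k => mul_nonneg (ih i k) (hP k j)

lemma lam_pos [DecidableEq E] {P : E → E → ℝ} (hP0 : ∀ i j, 0 ≤ P i j) (hP1 : ∀ i j, P i j ≤ 1)
    (hirr : ∀ i j, ∃ n : ℕ, 0 < matPow P n i j) (lam : ProbVec E)
    (hl : ∀ j, ∑' i, (lam : E → ℝ) i * P i j = (lam : E → ℝ) j) (j : E) : 0 < (lam : E → ℝ) j := by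
  obtain ⟨i, hi⟩ : ∃ i, 0 < (lam : E → ℝ) i := by
    by_contra! hn
    have : ∀ i, (lam : E → ℝ) i = 0 := fun i => le_antisymm (hn i) (lam.2.1 i)
    have h1 := pv_tsum lam
    simp [this] at h1
  obtain ⟨n, hn⟩ := hirr i j
  induction n generalizing j with
  | zero =>
    simp only [matPow] at hn
    split_ifs at hn with hij
    · rwa [← hij]
    · exact absurd hn (lt_irrefl _)
  | succ n ih =>
    obtain ⟨k, hk⟩ : ∃ k, matPow P n i k * P k j ≠ 0 := by
      by_contra! hz
      simp only [matPow, hz, tsum_zero] at hn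
      exact lt_irrefl _ hn
    have h1 := (matPow_nonneg hP0 n i k).lt_of_ne' (left_ne_zero_of_mul hk)
    have h2 := (hP0 k j).lt_of_ne' (right_ne_zero_of_mul hk)
    have h3 := ih k h1
    rw [← hl j]
    refine (mul_pos h3 h2).trans_le (Summable.le_tsum (f := fun i => (lam : E → ℝ) i * P i j) ?_ k
      (fun l _ => mul_nonneg (lam.2.1 l) (hP0 l j)))
    exact pv_mul_summable lam 1 (fun i => by rw [abs_of_nonneg (hP0 i j)]; exact hP1 i j)

lemma all_good [DecidableEq E] (hm : ∀ i j, Measurable fun y => M y i j) (h : RowBdd M)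
    (hP : ∀ i, HasSum (fun j => transMat M φ i j) 1)
    (𝕄 : ProbabilityMeasure (ProbVec E)) (h𝕄 : IsPiInvariant M φ 𝕄) (lam : ProbVec E)
    (hl : ∀ i, ∫ μ, (μ : E → ℝ) i ∂(𝕄 : Measure (ProbVec E)) = (lam : E → ℝ) i)
    (hpos : ∀ i, 0 < (lam : E → ℝ) i) (μ : ProbVec E) : GoodVec M φ μ := by
  intro i j
  refine Integrable.const_mul ?_ _
  by_contra hn
  have : ∫ μ, (μ : E → ℝ) i ∂(𝕄 : Measure (ProbVec E)) = 0 := by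
    refine integral_eq_zero_of_ae ?_
    filter_upwards [good_ae hm h hP 𝕄 h𝕄] with ν hν
    by_contra h0
    refine hn ?_
    have := (hν i j).const_mul ((ν : E → ℝ) i)⁻¹
    simpa only [← mul_assoc, inv_mul_cancel₀ h0, one_mul] using this
  have h2 := hpos i
  rw [← hl i, this] at h2
  exact lt_irrefl _ h2
end integ

lemma filterStep_congr {E F : Type*} {M M' : F → E → E → ℝ} {y : F} (h : M y = M' y)
    (μ : ProbVec E) : filterStep M μ y = filterStep M' μ y := by
  have hr : rowMul M (μ : E → ℝ) y = rowMul M' (μ : E → ℝ) y := by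
    unfold rowMul; rw [h]
  unfold filterStep
  rw [hr]

lemma filterKernel_congr {E F : Type*} [MeasurableSpace F] {φ : Measure F} {M M' : F → E → E → ℝ}
    (h : ∀ᵐ y ∂φ, M y = M' y) : filterKernel M φ = filterKernel M' φ := by
  funext f μ
  refine integral_congr_ae ?_
  filter_upwards [h] with y hy
  have hr : rowMul M (μ : E → ℝ) y = rowMul M' (μ : E → ℝ) y := by
    unfold rowMul; rw [hy]
  simp only [filterStep_congr hy, hr]

lemma transMat_congr {E F : Type*} [MeasurableSpace F] {φ : Measure F} {M M' : F → E → E → ℝ}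
    (h : ∀ᵐ y ∂φ, M y = M' y) : transMat M φ = transMat M' φ := by
  funext i j
  refine integral_congr_ae ?_
  filter_upwards [h] with y hy
  rw [hy]

lemma clip_bound {a b c : ℝ} (h1 : |a| ≤ b) (hc : 0 ≤ c) :
    |a - max (min a c) (-c)| ≤ |b - c| := by
  have := abs_le.1 h1
  have := le_abs_self (b - c)
  have := abs_nonneg (b - c)
  rw [abs_le]
  rcases min_cases a c with ⟨e, _⟩ | ⟨e, _⟩ <;> rw [e] <;>
  · rcases max_cases a (-c) with ⟨e', _⟩ | ⟨e', _⟩ <;>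
    rcases max_cases c (-c) with ⟨e'', _⟩ | ⟨e'', _⟩ <;> constructor <;> linarith

lemma gen_dct {F : Type*} [MeasurableSpace F] {φ : Measure F} {h g : ℕ → F → ℝ} {h0 g0 : F → ℝ}
    (hm : ∀ k, Measurable (h k))
    (gi : ∀ k, Integrable (g k) φ) (gi0 : Integrable g0 φ)
    (g0nn : ∀ y, 0 ≤ g0 y) (gnn : ∀ k y, 0 ≤ g k y)
    (hb : ∀ k y, |h k y| ≤ g k y) (hb0 : ∀ y, |h0 y| ≤ g0 y)
    (hg : ∀ y, Tendsto (fun k => g k y) atTop (𝓝 (g0 y)))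
    (hh : ∀ y, Tendsto (fun k => h k y) atTop (𝓝 (h0 y)))
    (hI : ∀ k, ∫ y, g k y ∂φ = ∫ y, g0 y ∂φ) :
    Tendsto (fun k => ∫ y, h k y ∂φ) atTop (𝓝 (∫ y, h0 y ∂φ)) := by
  have s1i : ∀ k, Integrable (fun y => max (g0 y - g k y) 0) φ := fun k => (gi0.sub (gi k)).pos_part
  have s1 : Tendsto (fun k => ∫ y, max (g0 y - g k y) 0 ∂φ) atTop (𝓝 (∫ y, (0 : ℝ) ∂φ)) := by
    refine tendsto_integral_of_dominated_convergence g0 (fun k => (s1i k).1) gi0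
      (fun k => Eventually.of_forall fun y => ?_) (Eventually.of_forall fun y => ?_)
    · rw [Real.norm_of_nonneg (le_max_right _ _)]
      exact max_le (by linarith [gnn k y]) (g0nn y)
    · have := ((tendsto_const_nhds (x := g0 y)).sub (hg y)).max (tendsto_const_nhds (x := (0 : ℝ)))
      simpa using this
  have s2 : Tendsto (fun k => ∫ y, |g k y - g0 y| ∂φ) atTop (𝓝 0) := by
    have e : ∀ k, ∫ y, |g k y - g0 y| ∂φ = 2 * ∫ y, max (g0 y - g k y) 0 ∂φ := by
      intro k
      have e1 : ∀ y, |g k y - g0 y| = (g k y - g0 y) + 2 * max (g0 y - g k y) 0 := by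
        intro y
        rcases le_total (g0 y) (g k y) with hh | hh
        · rw [abs_of_nonneg (by linarith), max_eq_right (by linarith)]; ring
        · rw [abs_of_nonpos (by linarith), max_eq_left (by linarith)]; ring
      simp only [e1]
      have i1 : Integrable (fun y => g k y - g0 y) φ := (gi k).sub gi0
      rw [integral_add i1 ((s1i k).const_mul 2), integral_sub (gi k) gi0, hI k,
        integral_const_mul]
      ring
    simp only [e]
    simpa using s1.const_mul 2
  have cm : ∀ k, AEStronglyMeasurable (fun y => max (min (h k y) (g0 y)) (-g0 y)) φ := fun k =>
    (((hm k).aestronglyMeasurable).inf gi0.1).sup gi0.1.neg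
  have cb : ∀ k y, ‖max (min (h k y) (g0 y)) (-g0 y)‖ ≤ g0 y := by
    intro k y
    rw [Real.norm_eq_abs, abs_le]
    exact ⟨le_max_right _ _, max_le (min_le_right _ _) (by linarith [g0nn y])⟩
  have ci : ∀ k, Integrable (fun y => max (min (h k y) (g0 y)) (-g0 y)) φ := fun k =>
    gi0.mono' (cm k) (Eventually.of_forall fun y => cb k y)
  have s3 : Tendsto (fun k => ∫ y, max (min (h k y) (g0 y)) (-g0 y) ∂φ) atTop
      (𝓝 (∫ y, h0 y ∂φ)) := by
    refine tendsto_integral_of_dominated_convergence g0 cm gi0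
      (fun k => Eventually.of_forall fun y => cb k y) (Eventually.of_forall fun y => ?_)
    have := ((hh y).min (tendsto_const_nhds (x := g0 y))).max (tendsto_const_nhds (x := -g0 y))
    have hy := abs_le.1 (hb0 y)
    rwa [min_eq_left hy.2, max_eq_left hy.1] at this
  have hi : ∀ k, Integrable (h k) φ := fun k =>
    (gi k).mono' (hm k).aestronglyMeasurable (Eventually.of_forall fun y => hb k y)
  have s4 : Tendsto (fun k => ∫ y, (h k y - max (min (h k y) (g0 y)) (-g0 y)) ∂φ) atTop (𝓝 0) := by
    refine squeeze_zero_norm (fun k => ?_) s2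
    refine norm_integral_le_of_norm_le ((gi k).sub gi0).abs (Eventually.of_forall fun y => ?_)
    exact clip_bound (hb k y) (g0nn y)
  have := s3.add s4
  rw [add_zero] at this
  refine this.congr fun k => ?_
  rw [integral_sub (hi k) (ci k)]
  ring

section feller
variable {E : Type*} [Countable E] {F : Type*} [MeasurableSpace F] {φ : Measure F}
  {M : F → E → E → ℝ}

lemma rowTot_tendsto (h : RowBdd M) {a : ℕ → ProbVec E} {b : ProbVec E}
    (hab : Tendsto a atTop (𝓝 b)) (y : F) :
    Tendsto (fun k => rowTot (rowMul M (a k : E → ℝ) y)) atTop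
      (𝓝 (rowTot (rowMul M (b : E → ℝ) y))) := by
  obtain ⟨C, hC⟩ := row_bound h y
  simp only [rowTot_eq h]
  exact pv_tendsto_mul hab C (fun i => by
    rw [abs_of_nonneg (tsum_nonneg (h.1 y i))]; exact hC i)

lemma rowMul_tendsto (h : RowBdd M) {a : ℕ → ProbVec E} {b : ProbVec E}
    (hab : Tendsto a atTop (𝓝 b)) (y : F) (j : E) :
    Tendsto (fun k => rowMul M (a k : E → ℝ) y j) atTop (𝓝 (rowMul M (b : E → ℝ) y j)) := by
  obtain ⟨C, hC⟩ := row_bound h y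
  exact pv_tendsto_mul hab C (fun i => by
    rw [abs_of_nonneg (h.1 y i j)]; exact (row_entry_le h y i j).trans (hC i))

lemma integrand_bound (h : RowBdd M) {f : ProbVec E → ℝ} {C : ℝ} (hC : ∀ μ, |f μ| ≤ C)
    (μ : ProbVec E) (y : F) :
    |f (filterStep M μ y) * rowTot (rowMul M (μ : E → ℝ) y)|
      ≤ C * rowTot (rowMul M (μ : E → ℝ) y) := by
  rw [abs_mul, abs_of_nonneg (rowTot_nonneg h μ y)]
  exact mul_le_mul_of_nonneg_right (hC _) (rowTot_nonneg h μ y)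

lemma integrand_tendsto (h : RowBdd M) {f : ProbVec E → ℝ} (hf : Continuous f) {C : ℝ}
    (hC : ∀ μ, |f μ| ≤ C) {a : ℕ → ProbVec E} {b : ProbVec E}
    (hab : Tendsto a atTop (𝓝 b)) (y : F) :
    Tendsto (fun k => f (filterStep M (a k) y) * rowTot (rowMul M (a k : E → ℝ) y)) atTop
      (𝓝 (f (filterStep M b y) * rowTot (rowMul M (b : E → ℝ) y))) := by
  have hT := rowTot_tendsto h hab y
  by_cases h0 : rowTot (rowMul M (b : E → ℝ) y) = 0
  · rw [h0, mul_zero]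
    rw [h0] at hT
    refine squeeze_zero_norm (fun k => integrand_bound h hC (a k) y) ?_
    simpa using hT.const_mul C
  · refine Tendsto.mul ((hf.tendsto _).comp ?_) hT
    rw [pv_tendsto_coord]
    intro j
    have h1 := (rowMul_tendsto h hab y j).div hT h0
    have e : (filterStep M b y : E → ℝ) j =
        rowMul M (b : E → ℝ) y j / rowTot (rowMul M (b : E → ℝ) y) := by
      rw [← step_mul h b y j, mul_div_cancel_right₀ _ h0]
    rw [e]
    refine h1.congr' ?_
    filter_upwards [hT.eventually_ne h0] with k hk
    simp only [Pi.div_apply]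
    rw [← step_mul h (a k) y j, mul_div_cancel_right₀ _ hk]

lemma integrand_integrable (hm : ∀ i j, Measurable fun y => M y i j) (h : RowBdd M)
    (hP : ∀ i, HasSum (fun j => transMat M φ i j) 1) (hgood : ∀ μ, GoodVec M φ μ)
    {f : ProbVec E → ℝ} (hf : IsBddCont f) (μ : ProbVec E) :
    Integrable (fun y => f (filterStep M μ y) * rowTot (rowMul M (μ : E → ℝ) y)) φ := by
  obtain ⟨hc, C, hC⟩ := hf
  exact ((integrable_rowTot h hP μ (hgood μ)).const_mul C).mono'
    (integrand_meas hm h μ hc).aestronglyMeasurable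
    (Eventually.of_forall fun y => integrand_bound h hC μ y)

lemma kernel_bddcont (hm : ∀ i j, Measurable fun y => M y i j) (h : RowBdd M)
    (hP : ∀ i, HasSum (fun j => transMat M φ i j) 1) (hgood : ∀ μ, GoodVec M φ μ)
    {f : ProbVec E → ℝ} (hf : IsBddCont f) : IsBddCont (filterKernel M φ f) := by
  obtain ⟨hc, C, hC⟩ := hf
  have hsc : SecondCountableTopology (ProbVec E) := pv_secondCountable
  have hiC := fun μ => (integrable_rowTot h hP μ (hgood μ)).const_mul C
  have hIC : ∀ μ : ProbVec E, ∫ y, C * rowTot (rowMul M (μ : E → ℝ) y) ∂φ = C := fun μ => by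
    rw [integral_const_mul, integral_rowTot h hP μ (hgood μ), mul_one]
  refine ⟨?_, C, fun μ => ?_⟩
  · rw [continuous_iff_seqContinuous]
    intro a b hab
    have hC0 : 0 ≤ C := (abs_nonneg _).trans (hC b)
    exact gen_dct (fun k => integrand_meas hm h (a k) hc) (fun k => hiC (a k)) (hiC b)
      (fun y => mul_nonneg hC0 (rowTot_nonneg h b y))
      (fun k y => mul_nonneg hC0 (rowTot_nonneg h (a k) y))
      (fun k y => integrand_bound h hC (a k) y) (fun y => integrand_bound h hC b y)
      (fun y => (rowTot_tendsto h hab y).const_mul C)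
      (fun y => integrand_tendsto h hc hC hab y) (fun k => by rw [hIC, hIC])
  · have := norm_integral_le_of_norm_le
      (f := fun y => f (filterStep M μ y) * rowTot (rowMul M (μ : E → ℝ) y)) (hiC μ)
      (Eventually.of_forall fun y => integrand_bound h hC μ y)
    rwa [hIC] at this

lemma kernel_convex (hm : ∀ i j, Measurable fun y => M y i j) (h : RowBdd M)
    (hP : ∀ i, HasSum (fun j => transMat M φ i j) 1) (hgood : ∀ μ, GoodVec M φ μ)
    {f : ProbVec E → ℝ} (hf : IsBddCont f) (hcv : IsConvexFn f) :
    IsConvexFn (filterKernel M φ f) := by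
  intro t ht0 ht1 p q
  have hi := integrand_integrable hm h hP hgood hf
  unfold filterKernel
  rw [← integral_const_mul, ← integral_const_mul,
    ← integral_add ((hi p).const_mul t) ((hi q).const_mul (1 - t))]
  exact integral_mono (hi _) (((hi p).const_mul t).add ((hi q).const_mul (1 - t)))
    (fun y => integrand_convex h hcv t ht0 ht1 p q y)

lemma main_aux [DecidableEq E] (φ : Measure F) (M : F → E → E → ℝ)
    (hm : ∀ i j, Measurable fun y => M y i j) (h : RowBdd M)
    (hP : ∀ i, HasSum (fun j => transMat M φ i j) 1)
    (hPirr : ∀ i j : E, ∃ n : ℕ, 0 < matPow (transMat M φ) n i j)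
    (lam : ProbVec E)
    (hlamInv : ∀ j, ∑' i, (lam : E → ℝ) i * transMat M φ i j = (lam : E → ℝ) j)
    (hlamUniq : ∀ ρ : ProbVec E,
      (∀ j, ∑' i, (ρ : E → ℝ) i * transMat M φ i j = (ρ : E → ℝ) j) → ρ = lam)
    (𝕄 : ProbabilityMeasure (ProbVec E)) (h𝕄 : IsPiInvariant M φ 𝕄) :
    (∀ i : E, ∫ ν, (ν : E → ℝ) i ∂(𝕄 : Measure (ProbVec E)) = (lam : E → ℝ) i) ∧
      ∀ f : ProbVec E → ℝ, IsBddCont f → IsConvexFn f → ∀ n : ℕ,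
        ((filterKernel M φ)^[n] f) lam ≤ ∫ ν, f ν ∂(𝕄 : Measure (ProbVec E)) ∧
          ∫ ν, f ν ∂(𝕄 : Measure (ProbVec E)) ≤
            ∑' x : E, (lam : E → ℝ) x * ((filterKernel M φ)^[n] f) (deltaPV x) := by
  obtain ⟨ρ, hρ⟩ := exists_bary (𝕄 : Measure (ProbVec E))
  have hρl := hlamUniq ρ (bary_inv hm h hP 𝕄 h𝕄 ρ hρ)
  subst hρl
  refine ⟨hρ, fun f hf hcv n => ?_⟩
  have hgood := all_good hm h hP 𝕄 h𝕄 ρ hρ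
    (lam_pos (transMat_nonneg h) (transMat_le_one h hP) hPirr ρ hlamInv)
  have key : IsBddCont ((filterKernel M φ)^[n] f) ∧ IsConvexFn ((filterKernel M φ)^[n] f) ∧
      ∫ ν, ((filterKernel M φ)^[n] f) ν ∂(𝕄 : Measure (ProbVec E)) =
        ∫ ν, f ν ∂(𝕄 : Measure (ProbVec E)) := by
    induction n with
    | zero => exact ⟨hf, hcv, rfl⟩
    | succ n ih =>
      rw [Function.iterate_succ_apply']
      exact ⟨kernel_bddcont hm h hP hgood ih.1, kernel_convex hm h hP hgood ih.1 ih.2.1,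
        (h𝕄 _ ih.1).trans ih.2.2⟩
  obtain ⟨k1, k2, k3⟩ := key
  rw [← k3]
  refine ⟨pv_jensen _ k1 k2 ρ hρ, ?_⟩
  obtain ⟨C, hC⟩ := k1.2
  rw [← integral_pv_mul (𝕄 : Measure (ProbVec E)) C (fun i => hC (deltaPV i)) ρ hρ]
  have hi2 : Integrable (fun ν : ProbVec E =>
      ∑' x, (ν : E → ℝ) x * ((filterKernel M φ)^[n] f) (deltaPV x))
      (𝕄 : Measure (ProbVec E)) := by
    refine Integrable.of_bound (C := C) (Measurable.aestronglyMeasurable ?_)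
      (Eventually.of_forall fun ν => ?_)
    · exact meas_tsum (fun i => (pv_coord_cont i).measurable.mul_const _)
        (fun ν => pv_mul_summable ν C (fun i => hC (deltaPV i)))
    · have h1 := (ν.2.2.mul_right C)
      rw [one_mul] at h1
      refine tsum_of_norm_bounded h1 fun i => ?_
      rw [norm_mul, Real.norm_of_nonneg (ν.2.1 i)]
      exact mul_le_mul_of_nonneg_left (hC _) (ν.2.1 i)
  exact integral_mono (bddcont_integrable _ k1) hi2 (fun ν => pv_delta_jensen k1 k2 ν)
end feller


/-- For any `Π`-invariant probability measure `𝕄` on `P(E)`: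
(i) the barycenter of `𝕄` is `λ`, and (ii) for every bounded continuous convex `f` and
every `n`, `Π^n f(λ) ≤ ∫ f d𝕄 ≤ ∑_x λ_x Π^n f(δ_x)`. -/
theorem invariant_measure_barycenter_and_convex_sandwich
    {E : Type*} [Countable E] [Nonempty E] [DecidableEq E]
    {F : Type*} [TopologicalSpace F] [PolishSpace F] [MeasurableSpace F] [BorelSpace F]
    (φ : Measure F) [SigmaFinite φ]
    (M : F → E → E → ℝ)
    (hMmeas : ∀ i j, Measurable fun y => M y i j)
    (hMnn : ∀ y i j, 0 ≤ M y i j)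
    (hMbd : ∀ᵐ y ∂φ, ∃ C : ℝ, ∀ (i : E) (s : Finset E), ∑ j ∈ s, M y i j ≤ C)
    (hPtrans : ∀ i, HasSum (fun j => transMat M φ i j) 1)
    (hPirr : ∀ i j : E, ∃ n : ℕ, 0 < matPow (transMat M φ) n i j)
    (lam : ProbVec E)
    (hlamInv : ∀ j, ∑' i, (lam : E → ℝ) i * transMat M φ i j = (lam : E → ℝ) j)
    (hlamUniq : ∀ ρ : ProbVec E,
      (∀ j, ∑' i, (ρ : E → ℝ) i * transMat M φ i j = (ρ : E → ℝ) j) → ρ = lam)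
    (𝕄 : ProbabilityMeasure (ProbVec E)) (h𝕄 : IsPiInvariant M φ 𝕄) :
    (∀ i : E, ∫ ν, (ν : E → ℝ) i ∂(𝕄 : Measure (ProbVec E)) = (lam : E → ℝ) i) ∧
      ∀ f : ProbVec E → ℝ, IsBddCont f → IsConvexFn f → ∀ n : ℕ,
        ((filterKernel M φ)^[n] f) lam ≤ ∫ ν, f ν ∂(𝕄 : Measure (ProbVec E)) ∧
          ∫ ν, f ν ∂(𝕄 : Measure (ProbVec E)) ≤
            ∑' x : E, (lam : E → ℝ) x * ((filterKernel M φ)^[n] f) (deltaPV x) := by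
  
  obtain ⟨t, ht, htm, ht0⟩ := exists_measurable_superset_of_null (ae_iff.1 hMbd)
  set M' : F → E → E → ℝ := fun y i j => tᶜ.indicator (fun y => M y i j) y with hM'
  have hyt : ∀ y, y ∉ t → M' y = M y := by
    intro y hy
    funext i j
    exact Set.indicator_of_mem (s := tᶜ) hy (fun y => M y i j)
  have hyt' : ∀ y, y ∈ t → M' y = 0 := by
    intro y hy
    funext i j
    exact Set.indicator_of_notMem (s := tᶜ) (fun hn => hn hy) (fun y => M y i j)
  have hae : ∀ᵐ y ∂φ, M' y = M y := by
    have : ∀ᵐ y ∂φ, y ∉ t := by simpa [ae_iff] using ht0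
    filter_upwards [this] with y hy
    exact hyt y hy
  have hm' : ∀ i j, Measurable fun y => M' y i j := fun i j =>
    (hMmeas i j).indicator htm.compl
  have hb' : RowBdd M' := by
    refine ⟨fun y i j => Set.indicator_nonneg (fun y _ => hMnn y i j) y, fun y => ?_⟩
    by_cases hy : y ∈ t
    · refine ⟨0, fun i s => ?_⟩
      rw [hyt' y hy]; simp
    · rw [hyt y hy]
      by_contra hn
      exact hy (ht hn)
  have hT : transMat M' φ = transMat M φ := transMat_congr hae
  have hK : filterKernel M' φ = filterKernel M φ := filterKernel_congr hae
  have hinv : IsPiInvariant M' φ 𝕄 := by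
    intro f hf
    rw [hK]; exact h𝕄 f hf
  rw [← hT] at hPtrans hPirr hlamInv hlamUniq
  rw [← hK]
  exact main_aux φ M' hm' hb' hPtrans hPirr lam hlamInv hlamUniq 𝕄 hinv
end

section
/- Let p ≥ 1, let A ∈ [0,∞)^{p×p} be a nonnegative matrix, let u ∈ [0,∞)^p be a nonnegative column vector, let ρ ∈ [0,∞)^p be a row vector with Σ_j ρ_j = 1, and let δ > 0 and α > δ. Suppose ‖A − uρ‖ < δ, where ‖B‖ := max_i Σ_j |B_{ij}| and uρ is the rank-one matrix (u_i ρ_j)_{ij}. Then for every probability row vector μ ∈ [0,∞)^p (Σ_i μ_i = 1) with μ·u > α: (i) μA1 := Σ_j (μA)_j > α − δ > 0, and (ii) Σ_j |(μA)_j/(μA1) − ρ_j| ≤ 2δ/(α − δ). -/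
open Finset

/-- Quantitative filter contraction near a rank-one matrix: if `‖A − uρ‖ < δ` in the
norm `‖B‖ = max_i ∑_j |B_{ij}|`, `ρ` is a probability row vector, and `μ` is a
probability row vector with `μ·u > α > δ`, then `μA1 > α − δ > 0` and
`‖μA/(μA1) − ρ‖ ≤ 2δ/(α − δ)` in `ℓ¹`. -/
theorem normalized_row_close_to_rho_of_close_to_rank_one
    (p : ℕ) (hp : 1 ≤ p)
    (A : Matrix (Fin p) (Fin p) ℝ) (hA : ∀ i j, 0 ≤ A i j)
    (u : Fin p → ℝ) (hu : ∀ i, 0 ≤ u i)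
    (ρ : Fin p → ℝ) (hρ : ∀ j, 0 ≤ ρ j) (hρ1 : ∑ j, ρ j = 1)
    (δ α : ℝ) (hδ : 0 < δ) (hα : δ < α)
    (hnorm : ∀ i, ∑ j, |A i j - u i * ρ j| < δ)
    (μ : Fin p → ℝ) (hμ : ∀ i, 0 ≤ μ i) (hμ1 : ∑ i, μ i = 1)
    (hμu : α < ∑ i, μ i * u i) :
    (0 < α - δ ∧ α - δ < ∑ j, ∑ i, μ i * A i j) ∧
      ∑ j, |(∑ i, μ i * A i j) / (∑ j', ∑ i, μ i * A i j') - ρ j| ≤ 2 * δ / (α - δ) := by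
  have h1 : ∑ j, |(∑ i, μ i * A i j) - (∑ i, μ i * u i) * ρ j| ≤ δ := by
    calc ∑ j, |(∑ i, μ i * A i j) - (∑ i, μ i * u i) * ρ j|
        ≤ ∑ j, ∑ i, μ i * |A i j - u i * ρ j| := by
          apply Finset.sum_le_sum
          intro j _
          rw [Finset.sum_mul, ← Finset.sum_sub_distrib]
          refine (Finset.abs_sum_le_sum_abs _ _).trans (le_of_eq ?_)
          apply Finset.sum_congr rfl
          intro i _
          rw [mul_assoc, ← mul_sub, abs_mul, abs_of_nonneg (hμ i)]
      _ = ∑ i, μ i * ∑ j, |A i j - u i * ρ j| := by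
          rw [Finset.sum_comm]
          simp only [Finset.mul_sum]
      _ ≤ ∑ i, μ i * δ :=
          Finset.sum_le_sum fun i _ => mul_le_mul_of_nonneg_left (hnorm i).le (hμ i)
      _ = δ := by rw [← Finset.sum_mul, hμ1, one_mul]
  generalize (∑ i, μ i * u i) = c at *
  generalize hv : (fun j => ∑ i, μ i * A i j) = v
  have hv' : ∀ j, ∑ i, μ i * A i j = v j := fun j => congrFun hv j
  simp only [hv'] at *
  have h2 : |(∑ j, v j) - c| ≤ δ := by
    have : (∑ j, v j) - c = ∑ j, (v j - c * ρ j) := by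
      rw [Finset.sum_sub_distrib, ← Finset.mul_sum, hρ1, mul_one]
    rw [this]
    exact (Finset.abs_sum_le_sum_abs _ _).trans h1
  generalize (∑ j, v j) = S at *
  have h3 := abs_le.mp h2
  have hS : α - δ < S := by linarith [h3.1]
  have h0 : 0 < α - δ := by linarith
  have hS0 : 0 < S := h0.trans hS
  refine ⟨⟨h0, hS⟩, ?_⟩
  calc ∑ j, |v j / S - ρ j| ≤ ∑ j, (|v j - c * ρ j| + |S - c| * ρ j) / S := by
        apply Finset.sum_le_sum
        intro j _
        have e : v j / S - ρ j = ((v j - c * ρ j) - (S - c) * ρ j) / S := by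
          field_simp
          ring
        rw [e, abs_div, abs_of_pos hS0]
        gcongr
        refine (abs_sub _ _).trans (le_of_eq ?_)
        rw [abs_mul (S - c), abs_of_nonneg (hρ j)]
    _ = ((∑ j, |v j - c * ρ j|) + |S - c|) / S := by
        rw [← Finset.sum_div, Finset.sum_add_distrib, ← Finset.mul_sum, hρ1, mul_one]
    _ ≤ 2 * δ / S := by
        gcongr
        linarith
    _ ≤ 2 * δ / (α - δ) := by
        gcongr
end
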